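/- arXiv:math/0703142 — 4 statements merged into one kernel-verified Lean document; each statement's English description precedes it below -/
import Mathlib

section
/- Every ordered pair of orthogonal Latin squares of order 4 is ∼'-equivalent to the pair (L₁, L₂); hence the set of ∼'-equivalence classes of ordered pairs of orthogonal Latin squares of order 4 has exactly one element. -/
/-- A Latin square of order `k` (rows, columns and symbols drawn from the same
`k`-element type, e.g. `Fin k` or `ZMod k`): every row and every column is a
bijection. -/
def IsLatinSquare {α : Type*} (L : α → α → α) : Prop :=
  (∀ i, Function.Bijective fun j => L i j) ∧ (∀ j, Function.Bijective fun i => L i j)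

/-- Two squares are orthogonal if `(i, j) ↦ (L i j, L' i j)` is a bijection. -/
def IsOrthogonal {α : Type*} (L L' : α → α → α) : Prop :=
  Function.Bijective fun p : α × α => (L p.1 p.2, L' p.1 p.2)

/-- The relation `∼` on Latin squares: `L ∼ L'` iff `L'` is obtained from `L` by
permuting rows, permuting columns and relabelling symbols. -/
def LatinEquiv {α : Type*} (L L' : α → α → α) : Prop :=
  ∃ a b c : Equiv.Perm α, ∀ i j, L' i j = c (L (a i) (b j))

/-- One elementary move on an ordered pair of squares: simultaneous row
permutation, simultaneous column permutation, relabelling the symbols of either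
square, transposing either square, or interchanging the squares. -/
inductive PairStep {α : Type*} :
    ((α → α → α) × (α → α → α)) → ((α → α → α) × (α → α → α)) → Prop
  | rows (P : (α → α → α) × (α → α → α)) (a : Equiv.Perm α) :
      PairStep P (fun i j => P.1 (a i) j, fun i j => P.2 (a i) j)
  | cols (P : (α → α → α) × (α → α → α)) (b : Equiv.Perm α) :
      PairStep P (fun i j => P.1 i (b j), fun i j => P.2 i (b j))
  | relabelFst (P : (α → α → α) × (α → α → α)) (c : Equiv.Perm α) :
      PairStep P (fun i j => c (P.1 i j), P.2)
  | relabelSnd (P : (α → α → α) × (α → α → α)) (c : Equiv.Perm α) :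
      PairStep P (P.1, fun i j => c (P.2 i j))
  | transposeFst (P : (α → α → α) × (α → α → α)) :
      PairStep P (fun i j => P.1 j i, P.2)
  | transposeSnd (P : (α → α → α) × (α → α → α)) :
      PairStep P (P.1, fun i j => P.2 j i)
  | swap (P : (α → α → α) × (α → α → α)) :
      PairStep P (P.2, P.1)

/-- The equivalence relation `∼'` on ordered pairs of squares, generated by the
elementary moves `PairStep`. -/
def PairEquiv {α : Type*} (P Q : (α → α → α) × (α → α → α)) : Prop :=
  Relation.EqvGen PairStep P Q

/-- The cyclic square `C_c` on `ZMod k`: `C_c i j = j + c * i`. -/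
def Csq (k : ℕ) (c : ZMod k) : ZMod k → ZMod k → ZMod k :=
  fun i j => j + c * i

/-- Ordered pairs of orthogonal Latin squares of order `k`. -/
def OLSPair (k : ℕ) :=
  {P : (Fin k → Fin k → Fin k) × (Fin k → Fin k → Fin k) //
    IsLatinSquare P.1 ∧ IsLatinSquare P.2 ∧ IsOrthogonal P.1 P.2}

/-- `∼'` as a setoid on ordered pairs of orthogonal Latin squares. -/
def olsSetoid (k : ℕ) : Setoid (OLSPair k) where
  r P Q := PairEquiv P.val Q.val
  iseqv := ⟨fun _ => Relation.EqvGen.refl _,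
            fun h => Relation.EqvGen.symm _ _ h,
            fun h h' => Relation.EqvGen.trans _ _ _ h h'⟩

/-- A transversal of a square: a permutation `f` of the columns such that
`i ↦ L i (f i)` is injective (hits every symbol exactly once). -/
def IsTransversal {α : Type*} (L : α → α → α) (f : Equiv.Perm α) : Prop :=
  Function.Injective fun i => L i (f i)

/-- `L` admits `k` pairwise disjoint transversals. -/
def HasDisjointTransversals {k : ℕ} (L : Fin k → Fin k → Fin k) : Prop :=
  ∃ T : Fin k → Equiv.Perm (Fin k), (∀ m, IsTransversal L (T m)) ∧
    ∀ m m', m ≠ m' → ∀ i, T m i ≠ T m' i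

/-- `G'_k`: Latin squares whose successive-row permutations `σ_{i,i+1}` all
equal one common permutation which is a single `k`-cycle. -/
def GPrime (k : ℕ) : Set (Fin k → Fin k → Fin k) :=
  {L | IsLatinSquare L ∧ ∃ σ : Equiv.Perm (Fin k), σ.IsCycle ∧ σ.support.card = k ∧
    ∀ (i : ℕ) (h : i + 1 < k) (p : Fin k),
      σ (L ⟨i, Nat.lt_of_succ_lt h⟩ p) = L ⟨i + 1, h⟩ p}

/-- `G_k`: Latin squares `∼`-equivalent to an element of `G'_k`. -/
def GSet (k : ℕ) : Set (Fin k → Fin k → Fin k) :=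
  {L | ∃ H ∈ GPrime k, LatinEquiv L H}

/-- The cyclic square `C_1`, written on `Fin k` via the identification of
`ZMod k` with `Fin k`: `C_1 i j = j + i (mod k)`. -/
def C1fin (k : ℕ) : Fin k → Fin k → Fin k :=
  fun i j => ⟨(j.1 + i.1) % k, Nat.mod_lt _ i.pos⟩

/-- The square `L₁` with rows (1,2,3,4),(2,1,4,3),(3,4,1,2),(4,3,2,1),
written on `Fin 4` via the identification `s ↦ s - 1` of {1,2,3,4} with Fin 4. -/
def L₁ : Fin 4 → Fin 4 → Fin 4 :=
  ![![0,1,2,3], ![1,0,3,2], ![2,3,0,1], ![3,2,1,0]]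

/-- The square `L₂` with rows (1,2,3,4),(4,3,2,1),(2,1,4,3),(3,4,1,2). -/
def L₂ : Fin 4 → Fin 4 → Fin 4 :=
  ![![0,1,2,3], ![3,2,1,0], ![1,0,3,2], ![2,3,0,1]]

/-- The square `L₃` with rows (1,2,3,4),(3,4,1,2),(4,3,2,1),(2,1,4,3). -/
def L₃ : Fin 4 → Fin 4 → Fin 4 :=
  ![![0,1,2,3], ![2,3,0,1], ![3,2,1,0], ![1,0,3,2]]

/-!
Identify `Fin 4` with the field `{0, 1, ω ^ 2, ω}`, in this order, where `ω` is a primitive cube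
root of unity. Then `L₁ i j = i + j`, `L₂ i j = ω * i + j` and `L₃ i j = ω ^ 2 * i + j`.

Normalize the pair `(M, N)` so that both squares have first row `id` and `M` has first column `id`.
Orthogonality gives `N i j = Q j (M i j)` for an idempotent Latin square `Q`. Each row of `Q` is a
permutation fixing exactly one of four points, hence a 3-cycle, i.e. a homothety of ratio `ω` or
`ω ^ 2`; homotheties of different ratios always agree at some point, so the ratio is the same for
all rows. The rows of `M` are transversals of `Q`, and the only transversals of `Q` that miss the
diagonal are the nonzero translations. So `M = L₁`, and `N` is `L₂` or `L₃`, which the Frobenius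
automorphism interchanges.
-/

open Function Equiv

section General

variable {α : Type*} {L L' M N : α → α → α}

theorem IsLatinSquare.isotope (hL : IsLatinSquare L) (a b c : Perm α) :
    IsLatinSquare fun i j => c (L (a i) (b j)) :=
  ⟨fun i => c.bijective.comp ((hL.1 (a i)).comp b.bijective),
    fun j => c.bijective.comp ((hL.2 (b j)).comp a.bijective)⟩

theorem IsOrthogonal.isotope (h : IsOrthogonal L L') (a b c c' : Perm α) :
    IsOrthogonal (fun i j => c (L (a i) (b j))) fun i j => c' (L' (a i) (b j)) :=
  (c.prodCongr c').bijective.comp (h.comp (a.prodCongr b).bijective)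

theorem pairEquiv_isotope (L L' : α → α → α) (a b c c' : Perm α) :
    PairEquiv (L, L') (fun i j => c (L (a i) (b j)), fun i j => c' (L' (a i) (b j))) :=
  .trans _ _ _ (.rel _ _ (.rows _ a)) <| .trans _ _ _ (.rel _ _ (.cols _ b)) <|
    .trans _ _ _ (.rel _ _ (.relabelFst _ c)) (.rel _ _ (.relabelSnd _ c'))

/-- A pair of orthogonal Latin squares in standard form: row `o` of both squares and column `o` of
the first one are the identity. Here `o` plays the role of the first row, column and symbol. -/
structure IsReducedPair (o : α) (M N : α → α → α) : Prop where
  latin_fst : IsLatinSquare M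
  latin_snd : IsLatinSquare N
  orthogonal : IsOrthogonal M N
  fst_row (j : α) : M o j = j
  fst_col (i : α) : M i o = i
  snd_row (j : α) : N o j = j

theorem IsOrthogonal.exists_isReducedPair (h : IsOrthogonal L L') (hL : IsLatinSquare L)
    (hL' : IsLatinSquare L') (o : α) :
    ∃ M N, IsReducedPair o M N ∧ PairEquiv (L, L') (M, N) := by
  let c : Perm α := (ofBijective _ (hL.1 o)).symm
  let c' : Perm α := (ofBijective _ (hL'.1 o)).symm
  let firstCol : Perm α := ofBijective (fun i => c (L i o)) (c.bijective.comp (hL.2 o))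
  have hc (j : α) : c (L o j) = j := ofBijective_symm_apply_apply _ (hL.1 o) j
  have hc' (j : α) : c' (L' o j) = j := ofBijective_symm_apply_apply _ (hL'.1 o) j
  have ho : firstCol.symm o = o := firstCol.symm_apply_eq.2 (hc o).symm
  refine ⟨_, _, ?_, pairEquiv_isotope L L' firstCol.symm 1 c c'⟩
  exact
    { latin_fst := hL.isotope _ _ _
      latin_snd := hL'.isotope _ _ _
      orthogonal := h.isotope _ _ _ _
      fst_row := fun j => by rw [ho]; exact hc j
      fst_col := firstCol.apply_symm_apply
      snd_row := fun j => by rw [ho]; exact hc' j }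

theorem IsOrthogonal.exists_isLatinSquare_eq (h : IsOrthogonal M N)
    (hM : ∀ j, Bijective fun i => M i j) (hN : ∀ j, Bijective fun i => N i j) :
    ∃ Q, IsLatinSquare Q ∧ ∀ i j, N i j = Q j (M i j) := by
  let col (j : α) : Perm α := ofBijective _ (hM j)
  have col_symm (j x : α) : M ((col j).symm x) j = x := (col j).apply_symm_apply x
  have symm_col (i j : α) : (col j).symm (M i j) = i := (col j).symm_apply_apply i
  refine ⟨fun j x => N ((col j).symm x) j,
    ⟨fun j => (hN j).comp (col j).symm.bijective, fun x => ⟨fun j k hjk => ?_, fun t => ?_⟩⟩,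
    fun i j => by simp only [symm_col]⟩
  · have hcell : ((col j).symm x, j) = ((col k).symm x, k) :=
      h.1 (Prod.ext ((col_symm j x).trans (col_symm k x).symm) hjk)
    exact congrArg Prod.snd hcell
  · obtain ⟨⟨i, j⟩, hij⟩ := h.2 (x, t)
    obtain ⟨rfl, rfl⟩ := Prod.mk.inj hij
    exact ⟨j, congrArg (N · j) (symm_col i j)⟩

end General

/-- For `T i j = r * i + j` over the field of four elements, the homothety `x ↦ r * (x - j) + j` of
centre `j` and ratio `r`. The square `L₁` is addition, which equals subtraction in
characteristic 2; the ratio is `ω` for `T = L₂` and `ω ^ 2` for `T = L₃`. -/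
def homothety (T : Fin 4 → Fin 4 → Fin 4) (j x : Fin 4) : Fin 4 :=
  T (L₁ x j) j

theorem eq_homothety_of_fixed_iff {j : Fin 4} {f : Perm (Fin 4)} (hf : ∀ x, f x = x ↔ x = j) :
    ⇑f = homothety L₂ j ∨ ⇑f = homothety L₃ j := by
  revert j f
  decide +kernel

theorem exists_homothety_L₂_eq_homothety_L₃ (j k : Fin 4) :
    ∃ x, homothety L₂ j x = homothety L₃ k x := by
  revert j k
  decide

theorem IsLatinSquare.eq_homothety_of_idempotent {Q : Fin 4 → Fin 4 → Fin 4}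
    (hQ : IsLatinSquare Q) (hidem : ∀ j, Q j j = j) :
    Q = homothety L₂ ∨ Q = homothety L₃ := by
  have hrow (j : Fin 4) : Q j = homothety L₂ j ∨ Q j = homothety L₃ j := by
    refine eq_homothety_of_fixed_iff (f := ofBijective (Q j) (hQ.1 j)) fun x => ⟨fun hx => ?_, ?_⟩
    · exact ((hQ.2 x).1 (hx.trans (hidem x).symm)).symm
    · rintro rfl
      exact hidem x
  by_contra! hne
  obtain ⟨j, hj⟩ := ne_iff.1 hne.1
  obtain ⟨k, hk⟩ := ne_iff.1 hne.2
  have hj₃ := (hrow j).resolve_left hj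
  have hk₂ := (hrow k).resolve_right hk
  obtain ⟨x, hx⟩ := exists_homothety_L₂_eq_homothety_L₃ k j
  obtain rfl : k = j := (hQ.2 x).1 (by simpa only [hk₂, hj₃] using hx)
  exact hj hk₂

theorem IsTransversal.eq_translation {T : Fin 4 → Fin 4 → Fin 4} (hT : T = L₂ ∨ T = L₃)
    {f : Perm (Fin 4)} (hf : IsTransversal (homothety T) f) (hfix : ∀ j, f j ≠ j) (j : Fin 4) :
    f j = L₁ (f 0) j := by
  unfold IsTransversal at hf
  rcases hT with rfl | rfl <;> revert f j <;> decide +kernel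

theorem homothety_translation {T : Fin 4 → Fin 4 → Fin 4} (i j : Fin 4) :
    homothety T j (L₁ i j) = T i j := by
  have hcancel : L₁ (L₁ i j) j = i := by revert i j; decide
  rw [homothety, hcancel]

theorem IsReducedPair.eq_L₁_and {M N : Fin 4 → Fin 4 → Fin 4} (h : IsReducedPair 0 M N) :
    M = L₁ ∧ (N = L₂ ∨ N = L₃) := by
  obtain ⟨Q, hQ, hNQ⟩ := h.orthogonal.exists_isLatinSquare_eq h.latin_fst.2 h.latin_snd.2
  have hidem (j : Fin 4) : Q j j = j := by
    simpa only [h.fst_row, h.snd_row] using (hNQ 0 j).symm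
  obtain ⟨T, hT, rfl⟩ : ∃ T, (T = L₂ ∨ T = L₃) ∧ Q = homothety T :=
    (hQ.eq_homothety_of_idempotent hidem).elim (fun hQ₂ => ⟨L₂, .inl rfl, hQ₂⟩)
      fun hQ₃ => ⟨L₃, .inr rfl, hQ₃⟩
  have hM (i j : Fin 4) : M i j = L₁ i j := by
    rcases eq_or_ne i 0 with rfl | hi
    · exact (h.fst_row j).trans (by revert j; decide)
    · let row : Perm (Fin 4) := ofBijective (M i) (h.latin_fst.1 i)
      have hrow : IsTransversal (homothety T) row := fun j k hjk =>
        (h.latin_snd.1 i).1 (((hNQ i j).trans hjk).trans (hNQ i k).symm)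
      have hfix (k : Fin 4) : row k ≠ k := fun hk =>
        hi ((h.latin_fst.2 k).1 (hk.trans (h.fst_row k).symm))
      exact (hrow.eq_translation hT hfix j).trans (congrArg (L₁ · j) (h.fst_col i))
  have hN : N = T := by
    funext i j
    rw [hNQ, hM, homothety_translation]
  exact ⟨funext₂ hM, hN ▸ hT⟩

theorem pairEquiv_L₁_L₃ : PairEquiv (L₁, L₃) (L₁, L₂) := by
  let frob : Perm (Fin 4) := swap 2 3
  have hfrob : ((fun i j => frob (L₁ (frob i) (frob j)), fun i j => frob (L₃ (frob i) (frob j))) :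
      (Fin 4 → Fin 4 → Fin 4) × (Fin 4 → Fin 4 → Fin 4)) = (L₁, L₂) := by decide
  exact hfrob ▸ pairEquiv_isotope L₁ L₃ frob frob frob frob

theorem IsOrthogonal.pairEquiv_L₁_L₂ {L L' : Fin 4 → Fin 4 → Fin 4} (h : IsOrthogonal L L')
    (hL : IsLatinSquare L) (hL' : IsLatinSquare L') : PairEquiv (L, L') (L₁, L₂) := by
  obtain ⟨M, N, hred, hequiv⟩ := h.exists_isReducedPair hL hL' 0
  obtain ⟨rfl, rfl | rfl⟩ := hred.eq_L₁_and
  · exact hequiv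
  · exact hequiv.trans _ _ _ pairEquiv_L₁_L₃

theorem isLatinSquare_L₁ : IsLatinSquare L₁ := by
  unfold IsLatinSquare
  decide

theorem isLatinSquare_L₂ : IsLatinSquare L₂ := by
  unfold IsLatinSquare
  decide

theorem isOrthogonal_L₁_L₂ : IsOrthogonal L₁ L₂ := by
  unfold IsOrthogonal
  decide +kernel

/-- Every ordered pair of orthogonal Latin squares of order 4 is
`∼'`-equivalent to `(L₁, L₂)`; hence there is exactly one `∼'`-equivalence
class of ordered pairs of orthogonal Latin squares of order 4. -/
theorem ols4_classes :
    (∀ L L' : Fin 4 → Fin 4 → Fin 4,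
      IsLatinSquare L → IsLatinSquare L' → IsOrthogonal L L' →
        PairEquiv (L, L') (L₁, L₂)) ∧
    Nat.card (Quotient (olsSetoid 4)) = 1 := by
  refine ⟨fun L L' hL hL' h => h.pairEquiv_L₁_L₂ hL hL', Nat.card_eq_one_iff_exists.2
    ⟨⟦⟨(L₁, L₂), isLatinSquare_L₁, isLatinSquare_L₂, isOrthogonal_L₁_L₂⟩⟧, Quotient.ind ?_⟩⟩
  rintro ⟨⟨L, L'⟩, hL, hL', h⟩
  exact Quotient.sound (h.pairEquiv_L₁_L₂ hL hL')
end

section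
/- If k ≥ 3 is odd and L ∈ G_k, then there exists a Latin square L' ∈ G_k that is orthogonal to L. -/
/-!
Every square of `G'_k` is a cyclic square `(i, j) ↦ σ ^ i (f j)`, with `σ` a full cycle and `f` its
first row. Applying `σ ^ i` once more to row `i` gives `(i, j) ↦ (σ ^ 2) ^ i (f j)`. A pair
(symbol of the first square, symbol of the second) determines `i`, because the powers of `σ` act
freely, and then `j`, so the two squares are orthogonal; the second one lies in `G'_k` because the
square of a full cycle of odd length is again a full cycle. Orthogonal mates transport along `∼`.
-/

section LatinSquares

variable {α : Type*}

theorem IsLatinSquare.comp_cols {L : α → α → α} (hL : IsLatinSquare L) (f : Equiv.Perm α) :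
    IsLatinSquare fun i j => L i (f j) :=
  ⟨fun i => (hL.1 i).comp f.bijective, fun j => hL.2 (f j)⟩

theorem isOrthogonal_comp_rows {L M : α → α → α} (hL : ∀ i, Function.Bijective (L i))
    (hM : ∀ s, Function.Bijective fun i => M i s) :
    IsOrthogonal L fun i j => M i (L i j) := by
  constructor
  · rintro ⟨i, j⟩ ⟨i', j'⟩ h
    obtain ⟨hsymbol, hmate⟩ := Prod.mk.inj h
    dsimp only at hsymbol hmate
    rw [hsymbol] at hmate
    obtain rfl : i = i' := (hM _).injective hmate
    rw [(hL i).injective hsymbol]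
  · rintro ⟨s, t⟩
    obtain ⟨i, hi⟩ := (hM s).surjective t
    obtain ⟨j, hj⟩ := (hL i).surjective s
    exact ⟨(i, j), by simpa only [hj, Prod.mk.injEq, true_and] using hi⟩

theorem LatinEquiv.exists_isOrthogonal {L H H' : α → α → α} (hLH : LatinEquiv L H)
    (hH : IsOrthogonal H H') : ∃ L', LatinEquiv L' H' ∧ IsOrthogonal L L' := by
  obtain ⟨a, b, c, hc⟩ := hLH
  refine ⟨fun i j => H' (a.symm i) (b.symm j), ⟨a, b, 1, by simp⟩, ?_⟩
  have hpair : (fun p : α × α => (L p.1 p.2, H' (a.symm p.1) (b.symm p.2))) =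
      (c.symm.prodCongr (.refl α) ∘ fun p => (H p.1 p.2, H' p.1 p.2)) ∘
        a.symm.prodCongr b.symm := by
    funext p
    simp [hc]
  rw [IsOrthogonal, hpair]
  exact ((c.symm.prodCongr (.refl α)).bijective.comp hH).comp (a.symm.prodCongr b.symm).bijective

end LatinSquares

section CyclicPermutations

variable {α : Type*}

theorem isCycleOn_pow_of_coprime {σ : Equiv.Perm α} {s : Finset α} (hσ : σ.IsCycleOn s) {n : ℕ}
    (hn : n.Coprime s.card) : (σ ^ n).IsCycleOn s := by
  refine ⟨hσ.1.perm_pow n, fun x hx y hy => ?_⟩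
  obtain ⟨j, -, rfl⟩ := hσ.exists_pow_eq hx hy
  obtain ⟨m, -, hm⟩ := Nat.exists_mul_mod_eq_of_coprime j hn (Finset.card_ne_zero_of_mem hx)
  refine ⟨m, ?_⟩
  rw [zpow_natCast, ← pow_mul]
  exact (hσ.pow_apply_eq_pow_apply hx).2 hm

theorem isCycle_and_card_support_eq_iff_isCycleOn_univ [Fintype α] [DecidableEq α] [Nontrivial α]
    {σ : Equiv.Perm α} :
    σ.IsCycle ∧ σ.support.card = Fintype.card α ↔ σ.IsCycleOn (Finset.univ : Finset α) := by
  rw [Finset.card_eq_iff_eq_univ]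
  constructor
  · rintro ⟨hσ, hsupp⟩
    rw [← hsupp, Equiv.Perm.coe_support_eq_set_support]
    exact hσ.isCycleOn
  · intro hσ
    have huniv : ((Finset.univ : Finset α) : Set α).Nontrivial := by
      simpa only [Finset.coe_univ] using Set.nontrivial_univ
    refine ⟨Equiv.Perm.isCycle_iff_exists_isCycleOn.2 ⟨_, huniv, hσ, by simp⟩, ?_⟩
    ext x
    simpa using hσ.apply_ne huniv (Finset.mem_univ x)

end CyclicPermutations

section CyclicSquares

variable {k : ℕ}

/-- The cyclic square of order `k` with first row the identity and with `σ` carrying each row to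
the next. For `σ` a full cycle, these are the squares of `G'_k` up to a permutation of columns. -/
def powerSquare (σ : Equiv.Perm (Fin k)) : Fin k → Fin k → Fin k :=
  fun i j => (σ ^ (i : ℕ)) j

theorem isLatinSquare_powerSquare {σ : Equiv.Perm (Fin k)}
    (hσ : σ.IsCycleOn (Finset.univ : Finset (Fin k))) : IsLatinSquare (powerSquare σ) := by
  refine ⟨fun i => (σ ^ (i : ℕ)).bijective, fun j => Finite.injective_iff_bijective.1 ?_⟩
  intro i i' h
  have hmod : i ≡ i' [MOD k] := by
    simpa using (hσ.pow_apply_eq_pow_apply (Finset.mem_univ j)).1 h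
  exact Fin.ext (hmod.eq_of_lt_of_lt i.isLt i'.isLt)

theorem eq_powerSquare_of_apply_row {L : Fin k → Fin k → Fin k} {σ : Equiv.Perm (Fin k)}
    (hσ : ∀ (i : ℕ) (h : i + 1 < k) (p : Fin k), σ (L ⟨i, Nat.lt_of_succ_lt h⟩ p) = L ⟨i + 1, h⟩ p)
    (hk : 0 < k) (i p : Fin k) : L i p = powerSquare σ i (L ⟨0, hk⟩ p) := by
  obtain ⟨n, hn⟩ := i
  induction n with
  | zero => rfl
  | succ n ih =>
    rw [← hσ n hn p, ih (Nat.lt_of_succ_lt hn)]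
    simp only [powerSquare, pow_succ', Equiv.Perm.mul_apply]

theorem mem_gPrime_iff [Nontrivial (Fin k)] {L : Fin k → Fin k → Fin k} :
    L ∈ GPrime k ↔ ∃ σ f : Equiv.Perm (Fin k), σ.IsCycleOn (Finset.univ : Finset (Fin k)) ∧
      L = fun i j => powerSquare σ i (f j) := by
  have hfull (σ : Equiv.Perm (Fin k)) := isCycle_and_card_support_eq_iff_isCycleOn_univ (σ := σ)
  simp only [Fintype.card_fin] at hfull
  constructor
  · rintro ⟨hL, σ, hcycle, hcard, hrow⟩
    have hk : 0 < k := Fin.pos_iff_nonempty.2 inferInstance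
    exact ⟨σ, .ofBijective (L ⟨0, hk⟩) (hL.1 _), (hfull σ).1 ⟨hcycle, hcard⟩,
      funext₂ (eq_powerSquare_of_apply_row hrow hk)⟩
  · rintro ⟨σ, f, hσ, rfl⟩
    obtain ⟨hcycle, hcard⟩ := (hfull σ).2 hσ
    refine ⟨(isLatinSquare_powerSquare hσ).comp_cols f, σ, hcycle, hcard, fun i _ p => ?_⟩
    simp only [powerSquare, pow_succ', Equiv.Perm.mul_apply]

theorem powerSquare_sq (σ : Equiv.Perm (Fin k)) (i j : Fin k) :
    powerSquare (σ ^ 2) i j = powerSquare σ i (powerSquare σ i j) := by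
  simp only [powerSquare, ← Equiv.Perm.mul_apply, ← pow_add, ← pow_mul, two_mul]

theorem exists_mem_gPrime_isOrthogonal [Nontrivial (Fin k)] (hodd : Odd k)
    {H : Fin k → Fin k → Fin k} (hH : H ∈ GPrime k) :
    ∃ H' ∈ GPrime k, IsOrthogonal H H' := by
  obtain ⟨σ, f, hσ, rfl⟩ := mem_gPrime_iff.1 hH
  have hsq : (σ ^ 2).IsCycleOn (Finset.univ : Finset (Fin k)) :=
    isCycleOn_pow_of_coprime hσ (by simpa using hodd)
  have hlatin := isLatinSquare_powerSquare hσ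
  refine ⟨fun i j => powerSquare (σ ^ 2) i (f j), mem_gPrime_iff.2 ⟨σ ^ 2, f, hsq, rfl⟩, ?_⟩
  simp only [powerSquare_sq]
  exact isOrthogonal_comp_rows (hlatin.comp_cols f).1 hlatin.2

end CyclicSquares

/-- If `k ≥ 3` is odd and `L ∈ Gₖ`, then some `L' ∈ Gₖ` is orthogonal to `L`. -/
theorem gset_has_orthogonal_mate_of_odd {k : ℕ} (hk : 3 ≤ k) (hodd : Odd k)
    (L : Fin k → Fin k → Fin k) (hL : L ∈ GSet k) :
    ∃ L' ∈ GSet k, IsOrthogonal L L' := by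
  have : Nontrivial (Fin k) := Fin.nontrivial_iff_two_le.2 (by lia)
  obtain ⟨H, hH, hLH⟩ := hL
  obtain ⟨H', hH', horth⟩ := exists_mem_gPrime_isOrthogonal hodd hH
  obtain ⟨L', hL', horth'⟩ := hLH.exists_isOrthogonal horth
  exact ⟨L', ⟨H', hH', hL'⟩, horth'⟩
end

section
/- If a Latin square L of order 5 has an orthogonal mate, then L ∼ C_1, where C_1 is the cyclic Latin square on ZMod 5 given by C_1 i j = j + i. -/
/-!
By a parity count due to Mann, a Latin square of order 5 with an orthogonal mate contains no
`2 × 2` subsquare. Indeed, with respect to such a subsquare on rows `R`, columns `C` and symbols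
`S`, any two of the conditions that a cell have its row in `R`, its column in `C` and its symbol in
`S` imply the third, so a cell satisfies none, exactly one or all of them. Over a transversal these
conditions hold `3 * 2` times in total, so the number of its cells satisfying none has the parity of
`5 - 3 * 2`; in particular it is positive. But only `3` cells of the square satisfy none of them,
too few for `5` disjoint transversals.

In the absence of `2 × 2` subsquares, the permutation carrying one row to another has no 2-cycle,
hence is a 5-cycle, and we may assume that rows `0` and `1` are `j ↦ j` and `j ↦ j + 1`. The other
three rows only contain entries `j + 2`, `j + 3`, `j + 4`. By pigeonhole one of them has two entries
of the form `j + 3`, which forces it to be `j ↦ j + 3`. The last two rows only contain `j + 2` and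
`j + 4`, which makes them translations as well.
-/

open Finset

section Transversals

variable {α : Type*} {L L' : α → α → α}

lemma exists_isTransversal_of_isOrthogonal [Finite α] (hL' : IsLatinSquare L')
    (horth : IsOrthogonal L L') :
    ∃ T : α → Equiv.Perm α, ∀ t, IsTransversal L (T t) ∧ ∀ i, L' i (T t i) = t := by
  choose T hT using fun t i => (hL'.1 i).2 t
  dsimp only at hT
  have T_injective (t : α) : Function.Injective (T t) := fun i i' h =>
    (hL'.2 (T t i')).1 <| show L' i (T t i') = L' i' (T t i') by rw [← h, hT, h, hT]
  refine ⟨fun t => .ofBijective (T t) (Finite.injective_iff_bijective.mp (T_injective t)),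
    fun t => ⟨fun i i' h => ?_, hT t⟩⟩
  exact congrArg Prod.fst <| horth.1 (a₁ := (i, T t i)) (a₂ := (i', T t i')) <|
    Prod.ext h ((hT t i).trans (hT t i').symm)

end Transversals

section Subsquares

variable {α : Type*} {L L' : α → α → α} {R C S : Finset α}

/-- The rows `R` and columns `C` of `L` form a subsquare on the symbols `S`. For a Latin square `L`
this says that the restriction of `L` to `R × C` is itself a Latin square on `S`. -/
structure IsSubsquare (L : α → α → α) (R C S : Finset α) : Prop where
  card_rows : #R = #S
  card_cols : #C = #S
  symbol_mem : ∀ ⦃i⦄, i ∈ R → ∀ ⦃j⦄, j ∈ C → L i j ∈ S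

lemma IsLatinSquare.transpose (hL : IsLatinSquare L) : IsLatinSquare fun i j => L j i :=
  ⟨hL.2, hL.1⟩

namespace IsSubsquare

lemma transpose (h : IsSubsquare L R C S) : IsSubsquare (fun i j => L j i) C R S :=
  ⟨h.card_cols, h.card_rows, fun _ hj _ hi => h.symbol_mem hi hj⟩

lemma col_mem (h : IsSubsquare L R C S) (hL : IsLatinSquare L) {i j : α} (hi : i ∈ R)
    (hs : L i j ∈ S) : j ∈ C := by
  obtain ⟨j', hj', heq⟩ := surjOn_of_injOn_of_card_le (L i) (fun _ hj => h.symbol_mem hi hj)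
    (hL.1 i).1.injOn h.card_cols.ge hs
  exact (hL.1 i).1 heq ▸ hj'

lemma row_mem (h : IsSubsquare L R C S) (hL : IsLatinSquare L) {i j : α} (hj : j ∈ C)
    (hs : L i j ∈ S) : i ∈ R :=
  h.transpose.col_mem hL.transpose hj hs

end IsSubsquare

variable [Fintype α] [DecidableEq α]

lemma card_filter_apply_mem_of_bijective {f : α → α} (hf : f.Bijective) (S : Finset α) :
    #{x | f x ∈ S} = #S :=
  card_bijective f hf (by simp)

/-- The cells of `L` whose row, column and symbol avoid `R`, `C` and `S` respectively. -/
def exteriorCells (L : α → α → α) (R C S : Finset α) : Finset (α × α) :=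
  {p | p.1 ∉ R ∧ p.2 ∉ C ∧ L p.1 p.2 ∉ S}

namespace IsSubsquare

lemma card_exteriorCells_row (h : IsSubsquare L R C S) (hL : IsLatinSquare L) {i : α}
    (hi : i ∉ R) : #{j | j ∉ C ∧ L i j ∉ S} = Fintype.card α - 2 * #S := by
  have hdisj : Disjoint C ({j | L i j ∈ S} : Finset α) :=
    disjoint_left.mpr fun j hj hs => hi (h.row_mem hL hj (mem_filter.mp hs).2)
  have hcompl : ({j | j ∉ C ∧ L i j ∉ S} : Finset α) = (C ∪ ({j | L i j ∈ S} : Finset α))ᶜ := by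
    ext; simp
  rw [hcompl, card_compl, card_union_of_disjoint hdisj, h.card_cols,
    card_filter_apply_mem_of_bijective (hL.1 i), two_mul]

lemma card_exteriorCells (h : IsSubsquare L R C S) (hL : IsLatinSquare L) :
    #(exteriorCells L R C S) =
      (Fintype.card α - #S) * (Fintype.card α - 2 * #S) := by
  have hsigma : #(exteriorCells L R C S) = #(Rᶜ.sigma fun i => {j | j ∉ C ∧ L i j ∉ S}) :=
    card_equiv (Equiv.sigmaEquivProd α α).symm (by simp [exteriorCells])
  rw [hsigma, card_sigma,
    sum_congr rfl fun i hi => h.card_exteriorCells_row hL (mem_compl.mp hi),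
    sum_const, card_compl, h.card_rows, smul_eq_mul]

lemma card_exterior_transversal_modEq (h : IsSubsquare L R C S) (hL : IsLatinSquare L)
    {f : Equiv.Perm α} (hf : IsTransversal L f) :
    #{i | i ∉ R ∧ f i ∉ C ∧ L i (f i) ∉ S} + #S ≡ Fintype.card α [MOD 2] := by
  have hcount (i : α) : (if i ∉ R ∧ f i ∉ C ∧ L i (f i) ∉ S then 1 else 0) +
      ((if i ∈ R then 1 else 0) + (if f i ∈ C then 1 else 0) +
        (if L i (f i) ∈ S then 1 else 0)) = (1 : ZMod 2) := by
    have hS := @h.symbol_mem i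
    have hC := h.col_mem hL (i := i) (j := f i)
    have hR := h.row_mem hL (i := i) (j := f i)
    by_cases i ∈ R <;> by_cases f i ∈ C <;> by_cases L i (f i) ∈ S <;>
      simp_all [CharTwo.add_self_eq_zero]
  have hsum := Fintype.sum_congr _ _ hcount
  simp only [sum_add_distrib, sum_boole, sum_const, card_univ, nsmul_one, filter_univ_mem,
    card_filter_apply_mem_of_bijective f.bijective,
    card_filter_apply_mem_of_bijective (Finite.injective_iff_bijective.mp hf),
    h.card_rows, h.card_cols, CharTwo.add_self_eq_zero, zero_add] at hsum
  rw [← ZMod.natCast_eq_natCast_iff]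
  exact_mod_cast hsum

omit [DecidableEq α] in
theorem not_isOrthogonal (h : IsSubsquare L R C S) (hL : IsLatinSquare L)
    (hL' : IsLatinSquare L') (hodd : Odd (Fintype.card α + #S))
    (hlt : (Fintype.card α - #S) * (Fintype.card α - 2 * #S) < Fintype.card α) :
    ¬ IsOrthogonal L L' := by
  classical
  intro horth
  obtain ⟨T, hT⟩ := exists_isTransversal_of_isOrthogonal hL' horth
  have hmeet (t : α) : ∃ i, i ∉ R ∧ T t i ∉ C ∧ L i (T t i) ∉ S := by
    have hpos : #{i | i ∉ R ∧ T t i ∉ C ∧ L i (T t i) ∉ S} ≠ 0 := by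
      have hmod := h.card_exterior_transversal_modEq hL (hT t).1
      have hodd' := Nat.odd_iff.mp hodd
      unfold Nat.ModEq at hmod
      omega
    simpa [Finset.Nonempty] using card_ne_zero.mp hpos
  choose r hr using hmeet
  have hinj : Function.Injective fun t => (r t, T t (r t)) := fun t t' heq => by
    rw [← (hT t).2 (r t), ← (hT t').2 (r t')]
    exact congrArg (fun p : α × α => L' p.1 p.2) heq
  have hle : Fintype.card α ≤ #(exteriorCells L R C S) :=
    card_le_card_of_injOn _ (fun t _ => by simpa [exteriorCells] using hr t) hinj.injOn
  rw [h.card_exteriorCells hL] at hle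
  exact hle.not_gt hlt

end IsSubsquare

end Subsquares

section Intercalates

variable {α : Type*} {L L' M : α → α → α}

/-- A square is intercalate-free if no two rows and two columns meet in a pattern
`x y / y x`, i.e. (for a Latin square) if it has no subsquare of order 2. -/
def IntercalateFree (L : α → α → α) : Prop :=
  ∀ ⦃i i' j j'⦄, i ≠ i' → j ≠ j' → L i j = L i' j' → L i j' ≠ L i' j

lemma IsLatinSquare.intercalateFree_of_isOrthogonal [Fintype α] (hα : Fintype.card α = 5)
    (hL : IsLatinSquare L) (hL' : IsLatinSquare L') (horth : IsOrthogonal L L') :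
    IntercalateFree L := by
  classical
  intro i i' j j' hi hj hdiag hanti
  have hS : #{L i j, L i j'} = 2 := card_pair ((hL.1 i).1.ne hj)
  have hsub : IsSubsquare L {i, i'} {j, j'} {L i j, L i j'} :=
    ⟨(card_pair hi).trans hS.symm, (card_pair hj).trans hS.symm, by simp [← hdiag, ← hanti]⟩
  refine hsub.not_isOrthogonal hL hL' ?_ ?_ horth <;> rw [hS, hα] <;> decide

lemma LatinEquiv.trans (h : LatinEquiv L M) (h' : LatinEquiv M L') : LatinEquiv L L' := by
  obtain ⟨a, b, c, h⟩ := h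
  obtain ⟨a', b', c', h'⟩ := h'
  exact ⟨a'.trans a, b'.trans b, c.trans c', fun i j => by simp [h, h']⟩

lemma LatinEquiv.isLatinSquare (h : LatinEquiv L M) (hL : IsLatinSquare L) :
    IsLatinSquare M := by
  obtain ⟨a, b, c, h⟩ := h
  obtain rfl : M = fun i j => c (L (a i) (b j)) := funext₂ h
  exact ⟨fun i => c.bijective.comp ((hL.1 (a i)).comp b.bijective),
    fun j => c.bijective.comp ((hL.2 (b j)).comp a.bijective)⟩

lemma LatinEquiv.intercalateFree (h : LatinEquiv L M) (hL : IntercalateFree L) :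
    IntercalateFree M := by
  obtain ⟨a, b, c, h⟩ := h
  intro i i' j j' hi hj
  simp only [h, ne_eq, c.apply_eq_iff_eq]
  exact hL (a.injective.ne hi) (b.injective.ne hj)

end Intercalates

section CycleStructure

variable {α : Type*} [Fintype α] {σ τ : Equiv.Perm α}

lemma three_le_of_mem_cycleType [DecidableEq α] (hσ : ∀ x, σ (σ x) ≠ x) {n : ℕ}
    (hn : n ∈ σ.cycleType) : 3 ≤ n := by
  refine lt_of_le_of_ne (Equiv.Perm.two_le_of_mem_cycleType hn) ?_
  rintro rfl
  obtain ⟨c, π, rfl, hdisj, -, hcard⟩ := Equiv.Perm.mem_cycleType_iff.mp hn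
  obtain ⟨x, y, hxy, rfl⟩ := Equiv.Perm.card_support_eq_two.mp hcard
  have hx : π x = x := (hdisj x).resolve_left (by simpa using hxy.symm)
  have hy : π y = y := (hdisj y).resolve_left (by simpa using hxy)
  exact hσ x (by simp [hx, hy])

lemma support_eq_univ_of_apply_apply_ne [DecidableEq α] (hσ : ∀ x, σ (σ x) ≠ x) :
    σ.support = univ :=
  eq_univ_of_forall fun x => Equiv.Perm.mem_support.mpr fun hx => hσ x (by rw [hx, hx])

lemma isCycle_of_apply_apply_ne [Nonempty α] (hα : Fintype.card α < 6)
    (hσ : ∀ x, σ (σ x) ≠ x) : σ.IsCycle := by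
  classical
  have hsum : σ.cycleType.sum = Fintype.card α := by
    rw [Equiv.Perm.sum_cycleType, support_eq_univ_of_apply_apply_ne hσ, card_univ]
  have hle : σ.cycleType.card * 3 ≤ σ.cycleType.sum :=
    Multiset.card_nsmul_le_sum fun _ => three_le_of_mem_cycleType hσ
  have hpos : 0 < σ.cycleType.card := by
    rw [Multiset.card_pos]
    intro h
    rw [h, Multiset.sum_zero] at hsum
    exact Fintype.card_ne_zero hsum.symm
  exact Equiv.Perm.card_cycleType_eq_one.mp (by omega)

lemma isConj_of_apply_apply_ne [Nonempty α] (hα : Fintype.card α < 6)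
    (hσ : ∀ x, σ (σ x) ≠ x) (hτ : ∀ x, τ (τ x) ≠ x) : IsConj σ τ := by
  classical
  refine (isCycle_of_apply_apply_ne hα hσ).isConj (isCycle_of_apply_apply_ne hα hτ) ?_
  rw [support_eq_univ_of_apply_apply_ne hσ, support_eq_univ_of_apply_apply_ne hτ]

end CycleStructure

section Rows

variable {α : Type*} {L : α → α → α}

/-- The `i`-th row of a Latin square, as a permutation taking columns to symbols. -/
noncomputable def IsLatinSquare.row (hL : IsLatinSquare L) (i : α) : Equiv.Perm α :=
  Equiv.ofBijective (L i) (hL.1 i)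

lemma IsLatinSquare.row_apply (hL : IsLatinSquare L) (i j : α) : hL.row i j = L i j := rfl

lemma IntercalateFree.inv_row_mul_row_apply_apply_ne (hfree : IntercalateFree L)
    (hL : IsLatinSquare L) {i i' : α} (hi : i ≠ i') (x : α) :
    ((hL.row i)⁻¹ * hL.row i') (((hL.row i)⁻¹ * hL.row i') x) ≠ x := by
  intro hx
  set y := ((hL.row i)⁻¹ * hL.row i') x
  have hxy : L i y = L i' x := (hL.row i).apply_symm_apply (L i' x)
  have hyx : L i x = L i' y := by
    conv_lhs => rw [← hx]
    exact (hL.row i).apply_symm_apply (L i' y)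
  have hne : x ≠ y := fun h => hi ((hL.2 x).1 (hyx.trans (h ▸ rfl)))
  exact hfree hi hne hyx hxy

lemma IntercalateFree.exists_latinEquiv_rows [Fintype α] (hα : Fintype.card α < 6)
    (hfree : IntercalateFree L) (hL : IsLatinSquare L) {i i' : α} (hi : i ≠ i')
    {τ : Equiv.Perm α} (hτ : ∀ x, τ (τ x) ≠ x) :
    ∃ M, LatinEquiv L M ∧ (∀ j, M i j = j) ∧ ∀ j, M i' j = τ j := by
  have : Nonempty α := ⟨i⟩
  obtain ⟨c, hc⟩ := isConj_iff.mp <|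
    isConj_of_apply_apply_ne hα (hfree.inv_row_mul_row_apply_apply_ne hL hi) hτ
  refine ⟨fun k j => (c * (hL.row i)⁻¹) (L k (c⁻¹ j)),
    ⟨1, c⁻¹, c * (hL.row i)⁻¹, fun _ _ => rfl⟩, fun j => ?_, fun j => ?_⟩
  · simp only [Equiv.Perm.mul_apply, ← hL.row_apply i, Equiv.Perm.inv_def,
      Equiv.symm_apply_apply, Equiv.apply_symm_apply]
  · simp only [← hc, Equiv.Perm.mul_apply, ← hL.row_apply i']

end Rows

section Translations

/-- The map `f` is a translation of `ZMod k`. -/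
def IsTranslation {k : ℕ} (f : ZMod k → ZMod k) : Prop :=
  ∀ x, f x = x + f 0

lemma IsLatinSquare.latinEquiv_csq {k : ℕ} {M : ZMod k → ZMod k → ZMod k}
    (hM : IsLatinSquare M) (hrows : ∀ i, IsTranslation (M i)) : LatinEquiv M (Csq k 1) := by
  let d : Equiv.Perm (ZMod k) := Equiv.ofBijective (fun i => M i 0) (hM.2 0)
  have hd (i : ZMod k) : M (d.symm i) 0 = i := d.apply_symm_apply i
  exact ⟨d.symm, 1, 1, fun i j => by simp [Csq, hrows (d.symm i) j, hd]⟩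

lemma apply_eq_add_of_apply_zero {p : ℕ} [Fact p.Prime] {f : ZMod p → ZMod p}
    (hf : f.Injective) {a b : ZMod p} (hab : ∀ x, f x = x + a ∨ f x = x + b) (h0 : f 0 = a)
    (x : ZMod p) : f x = x + a := by
  by_cases hne : a = b
  · simpa [hne] using hab x
  have hmul (n : ℕ) : f (n * (a - b)) = n * (a - b) + a := by
    induction n with
    | zero => simpa using h0
    | succ n ih =>
      refine (hab _).resolve_right fun hb => ?_
      have heq : f ((n + 1 : ℕ) * (a - b)) = f (n * (a - b)) := by
        rw [hb, ih]; push_cast; ring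
      have := hf heq
      exact sub_ne_zero.mpr hne (by push_cast at this; linear_combination this)
  have hx := hmul (x / (a - b)).val
  rwa [ZMod.natCast_zmod_val, div_mul_cancel₀ _ (sub_ne_zero.mpr hne)] at hx

lemma isTranslation_of_apply_eq_add_or {p : ℕ} [Fact p.Prime] {f : ZMod p → ZMod p}
    (hf : f.Injective) {a b : ZMod p} (hab : ∀ x, f x = x + a ∨ f x = x + b) :
    IsTranslation f := by
  intro x
  rcases hab 0 with h0 | h0 <;> rw [zero_add] at h0 <;> rw [h0]
  · exact apply_eq_add_of_apply_zero hf hab h0 x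
  · exact apply_eq_add_of_apply_zero hf (fun y => (hab y).symm) h0 x

end Translations

section OrderFive

variable {f : ZMod 5 → ZMod 5}

lemma apply_eq_add_two_or_add_four {x y : ZMod 5} (h0 : y ≠ x) (h1 : y ≠ x + 1)
    (h3 : y ≠ x + 3) : y = x + 2 ∨ y = x + 4 := by
  decide +revert

lemma apply_sub_one_eq_add_three (hf : f.Injective) (hsucc : ∀ x, f x ≠ x + 1)
    (htwo : ∀ x, f (f x) ≠ x) {x : ZMod 5} (h0 : f x = x + 3)
    (h1 : f (x + 1) = x + 1 + 3) : f (x - 1) = x - 1 + 3 := by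
  by_contra h
  have hfix (y : ZMod 5) : f y ≠ y := fun hy => htwo y (by rw [hy, hy])
  rcases apply_eq_add_two_or_add_four (hfix _) (hsucc _) h with h' | h'
  · have hcycle : f (f (x + 1)) = x + 1 := by
      rw [h1, show x + 1 + 3 = x - 1 by grind, h']
      ring
    exact htwo _ hcycle
  · have heq : f (x - 1) = f x := by rw [h', h0]; ring
    exact (by decide : (1 : ZMod 5) ≠ 0) (sub_eq_self.mp (hf heq))

lemma apply_add_one_eq_add_three (hf : f.Injective) (hfix : ∀ x, f x ≠ x)
    (hsucc : ∀ x, f x ≠ x + 1) {x : ZMod 5} (h0 : f x = x + 3)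
    (h2 : f (x + 2) = x + 2 + 3) : f (x + 1) = x + 1 + 3 := by
  by_contra h
  rcases apply_eq_add_two_or_add_four (hfix _) (hsucc _) h with h1 | h1
  · have heq : f (x + 1) = f x := by rw [h1, h0]; ring
    exact (by decide : (1 : ZMod 5) ≠ 0) (by simpa using hf heq)
  · have heq : f (x + 1) = f (x + 2) := by rw [h1, h2]; ring
    exact (by decide : (1 : ZMod 5) ≠ 2) (add_left_cancel (hf heq))

lemma forall_apply_eq_add_three (hf : f.Injective) (hsucc : ∀ x, f x ≠ x + 1)
    (htwo : ∀ x, f (f x) ≠ x) {x y : ZMod 5} (hxy : x ≠ y) (hx : f x = x + 3)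
    (hy : f y = y + 3) (z : ZMod 5) : f z = z + 3 := by
  have hfix (y : ZMod 5) : f y ≠ y := fun hy => htwo y (by rw [hy, hy])
  obtain ⟨w, hw, hw'⟩ : ∃ w, f w = w + 3 ∧ f (w + 1) = w + 1 + 3 := by
    have hcases : ∀ x y : ZMod 5, x ≠ y → y = x + 1 ∨ y = x + 2 ∨ x = y + 1 ∨ x = y + 2 := by
      decide
    rcases hcases x y hxy with rfl | rfl | rfl | rfl
    · exact ⟨x, hx, hy⟩
    · exact ⟨x, hx, apply_add_one_eq_add_three hf hfix hsucc hx hy⟩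
    · exact ⟨y, hy, hx⟩
    · exact ⟨y, hy, apply_add_one_eq_add_three hf hfix hsucc hy hx⟩
  have hdown (n : ℕ) : f (w - n) = w - n + 3 ∧ f (w - n + 1) = w - n + 1 + 3 := by
    induction n with
    | zero => simpa using ⟨hw, hw'⟩
    | succ n ih =>
      rw [Nat.cast_succ, ← sub_sub, sub_add_cancel]
      exact ⟨apply_sub_one_eq_add_three hf hsucc htwo ih.1 ih.2, ih.1⟩
  simpa using (hdown (w - z).val).1

variable {M : ZMod 5 → ZMod 5 → ZMod 5}

lemma exists_row_eq_add_three (hM : IsLatinSquare M) (hfree : IntercalateFree M)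
    (h0 : ∀ j, M 0 j = j) (h1 : ∀ j, M 1 j = j + 1) : ∃ i, ∀ j, M i j = j + 3 := by
  choose r hr using fun j => (hM.2 j).2 (j + 3)
  dsimp only at hr
  have hr0 (j : ZMod 5) : r j ≠ 0 := fun h => by
    have hj : M 0 j = j + 3 := h ▸ hr j
    grind
  have hr1 (j : ZMod 5) : r j ≠ 1 := fun h => by
    have hj : M 1 j = j + 3 := h ▸ hr j
    grind
  obtain ⟨x, -, y, -, hxy, heq⟩ : ∃ x ∈ univ, ∃ y ∈ univ, x ≠ y ∧ r x = r y :=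
    exists_ne_map_eq_of_card_lt_of_maps_to (t := {0, 1}ᶜ) (by decide)
      (fun j _ => by simp [hr0, hr1])
  refine ⟨r x, forall_apply_eq_add_three (hM.1 (r x)).1 (fun j h => ?_) (fun j h => ?_)
    hxy (hr x) (heq ▸ hr y)⟩
  · exact hr1 x ((hM.2 j).1 (h.trans (h1 j).symm))
  · have hne : j ≠ M (r x) j := fun h' => hr0 x ((hM.2 j).1 (h'.symm.trans (h0 j).symm))
    exact hfree (hr0 x).symm hne ((h0 j).trans h.symm) (h0 _)

lemma isTranslation_row (hM : IsLatinSquare M) (hfree : IntercalateFree M)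
    (h0 : ∀ j, M 0 j = j) (h1 : ∀ j, M 1 j = j + 1) (i : ZMod 5) : IsTranslation (M i) := by
  obtain ⟨i₃, h3⟩ := exists_row_eq_add_three hM hfree h0 h1
  by_cases hi0 : i = 0
  · simp [IsTranslation, hi0, h0]
  by_cases hi1 : i = 1
  · simp [IsTranslation, hi1, h1]
  by_cases hi3 : i = i₃
  · simp [IsTranslation, hi3, h3]
  have hne {i' : ZMod 5} (hi : i ≠ i') (j : ZMod 5) : M i j ≠ M i' j := (hM.2 j).1.ne hi
  have : Fact (Nat.Prime 5) := ⟨Nat.prime_five⟩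
  exact isTranslation_of_apply_eq_add_or (hM.1 i).1 fun j =>
    apply_eq_add_two_or_add_four ((hne hi0 j).trans_eq (h0 j)) ((hne hi1 j).trans_eq (h1 j))
      ((hne hi3 j).trans_eq (h3 j))

theorem IntercalateFree.latinEquiv_csq {L : ZMod 5 → ZMod 5 → ZMod 5}
    (hfree : IntercalateFree L) (hL : IsLatinSquare L) : LatinEquiv L (Csq 5 1) := by
  obtain ⟨M, hLM, h0, h1⟩ := hfree.exists_latinEquiv_rows (i := 0) (i' := 1)
    (τ := Equiv.addRight 1) (by decide) hL (by decide) (by decide)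
  have hM := hLM.isLatinSquare hL
  exact hLM.trans <| hM.latinEquiv_csq <| isTranslation_row hM (hLM.intercalateFree hfree) h0 h1

end OrderFive

/-- If a Latin square of order 5 has an orthogonal mate, then `L ∼ C₁`, the
cyclic square on `ZMod 5` (identified with `Fin 5`). -/
theorem equiv_cyclic_of_has_orthogonal_mate (L : Fin 5 → Fin 5 → Fin 5)
    (hL : IsLatinSquare L)
    (hmate : ∃ L' : Fin 5 → Fin 5 → Fin 5, IsLatinSquare L' ∧ IsOrthogonal L L') :
    LatinEquiv L (Csq 5 1) := by
  obtain ⟨L', hL', horth⟩ := hmate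
  have hfree : IntercalateFree L :=
    hL.intercalateFree_of_isOrthogonal (Fintype.card_fin 5) hL' horth
  -- `ZMod 5` is definitionally `Fin 5`.
  exact hfree.latinEquiv_csq hL
end

section
/- There exists a (4,3)-net in ℂℙ² (the Hessian configuration), and it is unique up to projective isomorphism: for any two (4,3)-nets (A, χ) and (A', χ') in ℂℙ² there exists a linear automorphism g ∈ GL(3, ℂ) whose induced action on subspaces of ℂ³ maps the set of lines ⋃_{i} A i bijectively onto the set of lines ⋃_{i} A' i. -/
/-- An `(n,k)`-net in `ℂℙ²`. Points of `ℂℙ²` are the 1-dimensional `ℂ`-linear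
subspaces of `ℂ³` and lines are the 2-dimensional subspaces; a point `p` lies
on a line `ℓ` iff `p ≤ ℓ`. `A` assigns to each `i : Fin n` a finite set of `k`
lines, the classes `A i` are pairwise disjoint, `χ` is a finite set of points,
lines from different classes are distinct and meet in a point of `χ`, and
through every point of `χ` there passes exactly one line of each class. -/
structure IsNet (n k : ℕ) (A : Fin n → Finset (Submodule ℂ (Fin 3 → ℂ)))
    (χ : Finset (Submodule ℂ (Fin 3 → ℂ))) : Prop where
  three_le : 3 ≤ n
  line_dim : ∀ i, ∀ ℓ ∈ A i, Module.finrank ℂ ℓ = 2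
  point_dim : ∀ p ∈ χ, Module.finrank ℂ p = 1
  card_eq : ∀ i, (A i).card = k
  classes_disjoint : ∀ i j, i ≠ j → Disjoint (A i) (A j)
  inter_mem : ∀ i j, i ≠ j → ∀ ℓ₁ ∈ A i, ∀ ℓ₂ ∈ A j, ℓ₁ ≠ ℓ₂ ∧ ℓ₁ ⊓ ℓ₂ ∈ χ
  unique_line : ∀ X ∈ χ, ∀ i, ∃! ℓ, ℓ ∈ A i ∧ X ≤ ℓ

/-!
Labelling each base point of a net by the lines through it gives an orthogonal array of strength
two. For four classes of three lines this array is unique up to relabelling: it is the affine plane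
`AG(2, 3)`, because the rows of a Latin square of order three are cyclic shifts of one another. Move
the points labelled `(0, 0)`, `(1, 0)`, `(0, 1)`, `(1, 1)` to the standard projective frame. The
collinearities of `AG(2, 3)` then express the other five points in terms of a single parameter `x`,
a root of `x ^ 2 - x + 1`. The two roots are `x` and `1 - x`; transposing `AG(2, 3)` amounts to
exchanging the last two coordinates and trades one root for the other, so the two resulting
configurations are projectively equivalent.
-/

open Submodule

section LinearAlgebra

variable {K V : Type*} [Field K] [AddCommGroup V] [Module K V] {P Q W W' : Submodule K V}

theorem sup_eq_of_finrank_eq_two (hP : Module.finrank K P = 1) (hQ : Module.finrank K Q = 1)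
    (hW : Module.finrank K W = 2) (hPQ : P ≠ Q) (hPW : P ≤ W) (hQW : Q ≤ W) : P ⊔ Q = W := by
  have : FiniteDimensional K W := Module.finite_of_finrank_pos (by lia)
  have : FiniteDimensional K ↥(P ⊔ Q) := finiteDimensional_of_le (sup_le hPW hQW)
  have hP_atom := isAtom_iff_finrank_eq_one.2 hP
  have hQ_atom := isAtom_iff_finrank_eq_one.2 hQ
  have hlt : P < P ⊔ Q :=
    left_lt_sup.2 fun hle => hPQ ((hP_atom.le_iff_eq hQ_atom.ne_bot).1 hle).symm
  have := finrank_lt_finrank_of_lt hlt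
  exact eq_of_le_of_finrank_le (sup_le hPW hQW) (by lia)

theorem inf_eq_of_finrank_eq_two (hP : Module.finrank K P = 1) (hW : Module.finrank K W = 2)
    (hW' : Module.finrank K W' = 2) (hne : W ≠ W') (hPW : P ≤ W) (hPW' : P ≤ W') :
    W ⊓ W' = P := by
  have : FiniteDimensional K W := Module.finite_of_finrank_pos (by lia)
  have : FiniteDimensional K W' := Module.finite_of_finrank_pos (by lia)
  have hlt : W ⊓ W' < W :=
    inf_lt_left.2 fun hle => hne (eq_of_le_of_finrank_le hle (by lia))
  have := finrank_lt_finrank_of_lt hlt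
  exact (eq_of_le_of_finrank_le (le_inf hPW hPW') (by lia)).symm

theorem exists_eq_span_add_smul {u v : V} (hP : Module.finrank K P = 1)
    (hle : P ≤ span K {u} ⊔ span K {v}) (hne : P ≠ span K {v}) :
    ∃ x : K, P = span K {u + x • v} := by
  obtain ⟨w, hw, rfl⟩ := (atom_iff_nonzero_span P).1 (isAtom_iff_finrank_eq_one.2 hP)
  rw [← span_insert, span_singleton_le_iff_mem] at hle
  obtain ⟨a, b, rfl⟩ := mem_span_pair.1 hle
  have ha : a ≠ 0 := by
    rintro rfl
    have hb : b ≠ 0 := by rintro rfl; simp at hw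
    exact hne (by rw [zero_smul, zero_add, span_singleton_smul_eq hb.isUnit])
  refine ⟨a⁻¹ * b, ?_⟩
  rw [← span_singleton_smul_eq ha.isUnit (u + _), smul_add, smul_smul, mul_inv_cancel_left₀ ha]

theorem det_eq_zero_of_row_mem {ι : Type*} [Fintype ι] [DecidableEq ι]
    {W : Submodule K (ι → K)} (hW : Module.finrank K W < Fintype.card ι) {M : Matrix ι ι K}
    (hM : ∀ i, M.row i ∈ W) : M.det = 0 := by
  by_contra hdet
  have hli : LinearIndependent K M.row :=
    Matrix.linearIndependent_rows_iff_isUnit.2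
      ((Matrix.isUnit_iff_isUnit_det M).2 (isUnit_iff_ne_zero.2 hdet))
  have hliW : LinearIndependent K fun i => (⟨M.row i, hM i⟩ : W) := .of_comp W.subtype hli
  exact hW.not_ge hliW.fintype_card_le_finrank

theorem exists_linearEquiv_map_frame {ι : Type*} [Fintype ι] [DecidableEq ι] [Nonempty ι]
    (hcard : Fintype.card ι = Module.finrank K V) {p W : ι → Submodule K V}
    (hp : ∀ i, Module.finrank K (p i) = 1) (hQ : Module.finrank K Q = 1)
    (hpW : ∀ i j, p j ≤ W i ↔ j ≠ i) (hQW : ∀ i, ¬ Q ≤ W i) :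
    ∃ g : V ≃ₗ[K] (ι → K), (∀ i, (p i).map g.toLinearMap = span K {Pi.single i 1}) ∧
      Q.map g.toLinearMap = span K {1} := by
  choose v _ hv using fun i =>
    (atom_iff_nonzero_span (p i)).1 (isAtom_iff_finrank_eq_one.2 (hp i))
  obtain ⟨t, -, rfl⟩ := (atom_iff_nonzero_span Q).1 (isAtom_iff_finrank_eq_one.2 hQ)
  simp only [hv, span_singleton_le_iff_mem] at hpW hQW
  have hli : LinearIndependent K v := by
    refine linearIndependent_iff_notMem_span.2 fun i hi => (hpW i i).1 ?_ rfl
    refine span_le.2 ?_ hi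
    rintro _ ⟨j, hj, rfl⟩
    exact (hpW i j).2 hj.2
  let b := basisOfLinearIndependentOfCardEqFinrank hli hcard
  have hb : ⇑b = v := coe_basisOfLinearIndependentOfCardEqFinrank hli hcard
  have hcoord : ∀ i, b.repr t i ≠ 0 := by
    intro i hi
    refine hQW i ?_
    rw [← b.sum_repr t, hb]
    refine sum_mem fun j _ => ?_
    obtain rfl | hj := eq_or_ne j i
    · simp [hi]
    · exact smul_mem _ _ ((hpW i j).2 hj)
  let c := fun i => Units.mk0 _ (hcoord i)
  refine ⟨(b.unitsSMul c).equivFun, fun i => ?_, ?_⟩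
  · have himage : (b.unitsSMul c).equivFun (v i) = (c i)⁻¹ • Pi.single i (1 : K) := by
      ext j
      simp only [Module.Basis.equivFun_apply, Module.Basis.repr_unitsSMul, ← hb,
        Module.Basis.repr_self, Finsupp.single_eq_pi_single, Pi.smul_apply]
      obtain rfl | hj := eq_or_ne j i
      · rfl
      · simp [hj]
    rw [hv, map_span, Set.image_singleton]
    exact (congrArg (span K {·}) himage).trans (span_singleton_group_smul_eq K (c i)⁻¹ _)
  · rw [map_span, Set.image_singleton]
    congr 2
    ext j
    simp [Module.Basis.repr_unitsSMul, c, Units.smul_def, hcoord]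

section BijOn

variable {V' V'' : Type*} [AddCommGroup V'] [Module K V'] [AddCommGroup V''] [Module K V'']
  {S : Set (Submodule K V)} {T : Set (Submodule K V')} {U : Set (Submodule K V'')}
  {g : V ≃ₗ[K] V'} {g' : V' ≃ₗ[K] V''}

theorem bijOn_map_symm (hg : Set.BijOn (Submodule.map g.toLinearMap) S T) :
    Set.BijOn (Submodule.map g.symm.toLinearMap) T S :=
  hg.symm ⟨fun W _ => (map_comp _ _ W).symm.trans (by simp),
    fun W _ => (map_comp _ _ W).symm.trans (by simp)⟩

theorem bijOn_map_trans (hg : Set.BijOn (Submodule.map g.toLinearMap) S T)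
    (hg' : Set.BijOn (Submodule.map g'.toLinearMap) T U) :
    Set.BijOn (Submodule.map (g.trans g').toLinearMap) S U :=
  (hg'.comp hg).congr fun W _ => (map_comp _ _ W).symm

end BijOn

end LinearAlgebra

section OrthogonalArray

variable {ι α γ : Type*}

/-- An orthogonal array of strength two and index one: the points `α` carry `ι` labels with values
in `γ`, any two of which coordinatize `α`. Equivalently, an abstract net whose `i`-th class
consists of the fibres of `f i`. -/
def IsOrthogonalArray (f : ι → α → γ) : Prop :=
  Pairwise fun i j => Function.Bijective fun q => (f i q, f j q)

namespace IsOrthogonalArray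

variable {f : ι → α → γ}

theorem exists_eq_and_eq (hf : IsOrthogonalArray f) {i j : ι} (hij : i ≠ j) (c d : γ) :
    ∃ q, f i q = c ∧ f j q = d := by
  simpa using (hf hij).surjective (c, d)

theorem eq_of_eq_of_eq (hf : IsOrthogonalArray f) {i j : ι} (hij : i ≠ j) {q r : α}
    (hi : f i q = f i r) (hj : f j q = f j r) : q = r :=
  (hf hij).injective (Prod.ext hi hj)

theorem comp_equiv {β : Type*} (hf : IsOrthogonalArray f) (e : β ≃ α) :
    IsOrthogonalArray fun i => f i ∘ e :=
  fun _ _ hij => (hf hij).comp e.bijective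

end IsOrthogonalArray

/-- The parallel class map of the affine plane `AG(2, 3)`, with point set `𝔽₃²` encoded as
`Fin 3 × Fin 3`: the lines of the `i`-th class are the fibres of `parallelClass i`. -/
def parallelClass : Fin 4 → Fin 3 × Fin 3 → Fin 3 :=
  ![fun q => q.1, fun q => q.2, fun q => q.1 + q.2, fun q => q.2 - q.1]

theorem isOrthogonalArray_parallelClass : IsOrthogonalArray parallelClass := by
  unfold IsOrthogonalArray Pairwise
  decide

theorem parallelClass_swap (i : Fin 4) (q : Fin 3 × Fin 3) :
    parallelClass (Equiv.swap 0 1 i) q.swap =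
      (![1, 1, 1, Equiv.neg _] : Fin 4 → Equiv.Perm (Fin 3)) i (parallelClass i q) := by
  revert i q
  decide

theorem exists_perm_of_latinSquare {g : Fin 3 → Fin 3 → Fin 3}
    (hrow : ∀ a, Function.Injective (g a)) (hcol : ∀ b, Function.Injective fun a => g a b) :
    ∃ τ : Equiv.Perm (Fin 3), (∀ a b, g a b = τ (a + b)) ∨ ∀ a b, g a b = τ (b - a) := by
  let τ : Equiv.Perm (Fin 3) := .ofBijective (g 0) (Finite.injective_iff_bijective.1 (hrow 0))
  have derangement_eq_shift : ∀ π : Fin 3 → Fin 3, Function.Injective π → (∀ b, π b ≠ b) →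
      (∀ b, π b = 1 + b) ∨ ∀ b, π b = 2 + b := by decide
  have row_eq_shift (a : Fin 3) (ha : a ≠ 0) :
      (∀ b, g a b = τ (1 + b)) ∨ ∀ b, g a b = τ (2 + b) := by
    have hfix (b : Fin 3) : τ.symm (g a b) ≠ b := fun hb =>
      ha (hcol b ((Equiv.symm_apply_eq τ).1 hb))
    simpa only [Function.comp_apply, Equiv.symm_apply_eq] using
      derangement_eq_shift (τ.symm ∘ g a) (τ.symm.injective.comp (hrow a)) hfix
  have hne : g 1 0 ≠ g 2 0 := fun h => absurd (hcol 0 h) (by decide)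
  refine ⟨τ, ?_⟩
  obtain h₁ | h₁ := row_eq_shift 1 (by decide) <;> obtain h₂ | h₂ := row_eq_shift 2 (by decide)
  · exact absurd ((h₁ 0).trans (h₂ 0).symm) hne
  · refine .inl fun a b => ?_
    fin_cases a
    exacts [congrArg τ (zero_add b).symm, h₁ b, h₂ b]
  · refine .inr fun a b => ?_
    rw [sub_eq_neg_add]
    fin_cases a
    exacts [congrArg τ (zero_add b).symm, h₁ b, h₂ b]
  · exact absurd ((h₁ 0).trans (h₂ 0).symm) hne

theorem IsOrthogonalArray.exists_perm_of_eq_fst_of_eq_snd {f : ι → Fin 3 × Fin 3 → Fin 3}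
    (hf : IsOrthogonalArray f) {i j k : ι} (hi : f i = Prod.fst) (hj : f j = Prod.snd)
    (hki : k ≠ i) (hkj : k ≠ j) :
    ∃ τ : Equiv.Perm (Fin 3), (∀ q, f k q = τ (q.1 + q.2)) ∨ ∀ q, f k q = τ (q.2 - q.1) := by
  have hrow (a : Fin 3) : Function.Injective fun b => f k (a, b) := fun b b' h =>
    congrArg Prod.snd (hf.eq_of_eq_of_eq hki h (by simp [hi]))
  have hcol (b : Fin 3) : Function.Injective fun a => f k (a, b) := fun a a' h =>
    congrArg Prod.fst (hf.eq_of_eq_of_eq hkj h (by simp [hj]))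
  simpa only [Prod.forall] using exists_perm_of_latinSquare hrow hcol

theorem IsOrthogonalArray.exists_relabelling {f : Fin 4 → α → Fin 3} (hf : IsOrthogonalArray f) :
    ∃ (σ : Equiv.Perm (Fin 4)) (τ : Fin 4 → Equiv.Perm (Fin 3)) (e : Fin 3 × Fin 3 ≃ α),
      ∀ i q, f (σ i) (e q) = τ i (parallelClass i q) := by
  let e := (Equiv.ofBijective _ (hf (i := 0) (j := 1) (by decide))).symm
  have he (q) : (f 0 (e q), f 1 (e q)) = q := e.symm_apply_apply q
  have h0 (q) : f 0 (e q) = q.1 := congrArg Prod.fst (he q)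
  have h1 (q) : f 1 (e q) = q.2 := congrArg Prod.snd (he q)
  have label (k : Fin 4) (hk0 : k ≠ 0) (hk1 : k ≠ 1) :=
    (hf.comp_equiv e).exists_perm_of_eq_fst_of_eq_snd (funext h0) (funext h1) hk0 hk1
  have hinj {q r} (h2 : f 2 (e q) = f 2 (e r)) (h3 : f 3 (e q) = f 3 (e r)) : q = r :=
    e.injective (hf.eq_of_eq_of_eq (by decide) h2 h3)
  obtain ⟨τ₂, h2 | h2⟩ := label 2 (by decide) (by decide) <;>
    obtain ⟨τ₃, h3 | h3⟩ := label 3 (by decide) (by decide) <;>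
    dsimp only [Function.comp_apply] at h2 h3
  · exact absurd (hinj (q := (0, 1)) (r := (1, 0)) (by simp [h2]) (by simp [h3])) (by decide)
  · refine ⟨1, ![1, 1, τ₂, τ₃], e, fun i q => ?_⟩
    fin_cases i
    exacts [h0 q, h1 q, h2 q, h3 q]
  · refine ⟨Equiv.swap 2 3, ![1, 1, τ₃, τ₂], e, fun i q => ?_⟩
    fin_cases i
    exacts [h0 q, h1 q, h3 q, h2 q]
  · exact absurd (hinj (q := (0, 0)) (r := (1, 1)) (by simp [h2]) (by simp [h3])) (by decide)

end OrthogonalArray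

section Realization

variable {ι α γ K V V' : Type*} [Field K] [AddCommGroup V] [Module K V] [AddCommGroup V']
  [Module K V']

/-- Points `p q` and lines `L i c` of the projective space of `V` whose mutual incidences are
those of the abstract points `q : α` and the fibres of the labels `f i`. -/
structure IsRealization (f : ι → α → γ) (L : ι → γ → Submodule K V) (p : α → Submodule K V) :
    Prop where
  finrank_line : ∀ i c, Module.finrank K (L i c) = 2
  finrank_point : ∀ q, Module.finrank K (p q) = 1
  le_iff : ∀ i c q, p q ≤ L i c ↔ f i q = c

namespace IsRealization

variable {f : ι → α → γ} {L L' : ι → γ → Submodule K V} {p : α → Submodule K V}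

theorem le_line (h : IsRealization f L p) (i : ι) (q : α) : p q ≤ L i (f i q) :=
  (h.le_iff i _ q).2 rfl

theorem map (h : IsRealization f L p) (g : V ≃ₗ[K] V') :
    IsRealization f (fun i c => (L i c).map g.toLinearMap) (fun q => (p q).map g.toLinearMap) where
  finrank_line i c := (g.finrank_map_eq _).trans (h.finrank_line i c)
  finrank_point q := (g.finrank_map_eq _).trans (h.finrank_point q)
  le_iff i c q := by rw [map_le_map_iff_of_injective g.injective, h.le_iff]

theorem relabel {ι' α' γ' : Type*} {f' : ι' → α' → γ'} (h : IsRealization f L p) (σ : ι' → ι)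
    (τ : ι' → γ' ≃ γ) (e : α' → α) (hf' : ∀ i q, f (σ i) (e q) = τ i (f' i q)) :
    IsRealization f' (fun i c => L (σ i) (τ i c)) (p ∘ e) where
  finrank_line _ _ := h.finrank_line _ _
  finrank_point _ := h.finrank_point _
  le_iff i c q := by rw [Function.comp_apply, h.le_iff, hf', (τ i).apply_eq_iff_eq]

theorem injective_point [Nontrivial ι] (hf : IsOrthogonalArray f) (h : IsRealization f L p) :
    Function.Injective p := by
  intro q r hqr
  obtain ⟨i, j, hij⟩ := exists_pair_ne ι
  have label_eq (k : ι) : f k q = f k r := (h.le_iff k _ q).1 (hqr ▸ h.le_line k r)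
  exact hf.eq_of_eq_of_eq hij (label_eq i) (label_eq j)

theorem injective_line [Nontrivial ι] [Nonempty γ] (hf : IsOrthogonalArray f)
    (h : IsRealization f L p) (i : ι) : Function.Injective (L i) := by
  intro c d hcd
  obtain ⟨j, hj⟩ := exists_ne i
  obtain ⟨q, rfl, -⟩ := hf.exists_eq_and_eq hj.symm c (Classical.arbitrary γ)
  exact (h.le_iff i d q).1 (hcd ▸ h.le_line i q)

theorem line_ne_line [Nontrivial γ] (hf : IsOrthogonalArray f) (h : IsRealization f L p)
    {i j : ι} (hij : i ≠ j) (c d : γ) : L i c ≠ L j d := by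
  intro heq
  obtain ⟨d', hd'⟩ := exists_ne d
  obtain ⟨q, rfl, rfl⟩ := hf.exists_eq_and_eq hij c d'
  exact hd' ((h.le_iff j d q).1 (heq ▸ h.le_line i q))

theorem sup_eq_line [Nontrivial ι] (hf : IsOrthogonalArray f) (h : IsRealization f L p)
    {i : ι} {c : γ} {q r : α} (hqr : q ≠ r) (hq : f i q = c) (hr : f i r = c) :
    p q ⊔ p r = L i c :=
  sup_eq_of_finrank_eq_two (h.finrank_point q) (h.finrank_point r) (h.finrank_line i c)
    ((h.injective_point hf).ne hqr) ((h.le_iff i c q).2 hq) ((h.le_iff i c r).2 hr)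

theorem line_unique [Nontrivial ι] [Nontrivial γ] (hf : IsOrthogonalArray f)
    (h : IsRealization f L p) (h' : IsRealization f L' p) : L = L' := by
  ext1 i
  ext1 c
  obtain ⟨j, hj⟩ := exists_ne i
  obtain ⟨d, d', hd⟩ := exists_pair_ne γ
  obtain ⟨q, hq, rfl⟩ := hf.exists_eq_and_eq hj.symm c d
  obtain ⟨r, hr, rfl⟩ := hf.exists_eq_and_eq hj.symm c d'
  have hqr : q ≠ r := fun h => hd (congrArg (f j) h)
  rw [← h.sup_eq_line hf hqr hq hr, ← h'.sup_eq_line hf hqr hq hr]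

theorem bijOn_lines [Nontrivial ι] [Nontrivial γ] {M : ι → γ → Submodule K V'}
    {s : α → Submodule K V'} (hf : IsOrthogonalArray f) (h : IsRealization f L p)
    (h' : IsRealization f M s) (g : V ≃ₗ[K] V') (hg : ∀ q, (p q).map g.toLinearMap = s q) :
    Set.BijOn (Submodule.map g.toLinearMap) (⋃ i, Set.range (L i)) (⋃ i, Set.range (M i)) := by
  obtain rfl : (fun q => (p q).map g.toLinearMap) = s := funext hg
  obtain rfl := (h.map g).line_unique hf h'
  have := (map_injective_of_injective g.injective).injOn.bijOn_image (s := ⋃ i, Set.range (L i))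
  simpa only [Set.image_iUnion, ← Set.range_comp, Function.comp_def] using this

theorem exists_point_eq_span_add_smul [Nontrivial ι] (hf : IsOrthogonalArray f)
    (h : IsRealization f L p) (i : ι) {q r s : α} {u v : V} (hu : p q = span K {u})
    (hv : p r = span K {v}) (hqr : q ≠ r) (hsr : s ≠ r) (hiq : f i q = f i s)
    (hir : f i r = f i s) : ∃ x : K, p s = span K {u + x • v} := by
  refine exists_eq_span_add_smul (h.finrank_point s) ?_ (hv ▸ (h.injective_point hf).ne hsr)
  rw [← hu, ← hv, h.sup_eq_line hf hqr hiq hir]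
  exact h.le_line i s

theorem det_eq_zero {L : ι → γ → Submodule K (Fin 3 → K)} {p : α → Submodule K (Fin 3 → K)}
    (h : IsRealization f L p) (i : ι) {q r s : α} {u v w : Fin 3 → K} (hu : p q = span K {u})
    (hv : p r = span K {v}) (hw : p s = span K {w}) (hiq : f i q = f i s) (hir : f i r = f i s) :
    (Matrix.of ![u, v, w]).det = 0 := by
  have mem {t x} (hit : f i t = f i s) (hx : p t = span K {x}) : x ∈ L i (f i s) :=
    (span_singleton_le_iff_mem _ _).1 (hx ▸ (h.le_iff i _ t).2 hit)
  refine det_eq_zero_of_row_mem (W := L i (f i s)) (by simp [h.finrank_line]) fun j => ?_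
  fin_cases j
  exacts [mem hiq hu, mem hir hv, mem rfl hw]

end IsRealization

theorem iUnion_range_relabel {β : Type*} (L : ι → γ → β) (σ : Equiv.Perm ι)
    (τ : ι → Equiv.Perm γ) :
    ⋃ i, Set.range (fun c => L (σ i) (τ i c)) = ⋃ i, Set.range (L i) := by
  simp only [← Function.comp_def (L _), (τ _).surjective.range_comp]
  exact σ.surjective.iUnion_comp fun i => Set.range (L i)

end Realization

section Net

variable {ι K V : Type*} [Field K] [AddCommGroup V] [Module K V]
  {A : ι → Finset (Submodule K V)} {χ : Finset (Submodule K V)} {k : ℕ}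

/-- A net in the projective space of `V`, with classes `A i` of `k` lines and base locus `χ`.
For `V = ℂ³` and at least three classes this is `IsNet`; disjointness of the classes is part of
`inter_mem`. -/
structure IsProjectiveNet (k : ℕ) (A : ι → Finset (Submodule K V)) (χ : Finset (Submodule K V)) :
    Prop where
  finrank_line : ∀ i, ∀ ℓ ∈ A i, Module.finrank K ℓ = 2
  finrank_point : ∀ X ∈ χ, Module.finrank K X = 1
  card_eq : ∀ i, (A i).card = k
  inter_mem : ∀ i j, i ≠ j → ∀ ℓ₁ ∈ A i, ∀ ℓ₂ ∈ A j, ℓ₁ ≠ ℓ₂ ∧ ℓ₁ ⊓ ℓ₂ ∈ χ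
  unique_line : ∀ X ∈ χ, ∀ i, ∃! ℓ, ℓ ∈ A i ∧ X ≤ ℓ

theorem isNet_iff {n : ℕ} {A : Fin n → Finset (Submodule ℂ (Fin 3 → ℂ))}
    {χ : Finset (Submodule ℂ (Fin 3 → ℂ))} : IsNet n k A χ ↔ 3 ≤ n ∧ IsProjectiveNet k A χ where
  mp h := ⟨h.three_le, h.line_dim, h.point_dim, h.card_eq, h.inter_mem, h.unique_line⟩
  mpr := fun ⟨hn, h⟩ => ⟨hn, h.finrank_line, h.finrank_point, h.card_eq,
    fun i j hij => Finset.disjoint_left.2 fun ℓ hi hj => (h.inter_mem i j hij ℓ hi ℓ hj).1 rfl,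
    h.inter_mem, h.unique_line⟩

theorem IsProjectiveNet.exists_isRealization (h : IsProjectiveNet k A χ) :
    ∃ (f : ι → χ → Fin k) (L : ι → Fin k → Submodule K V),
      IsOrthogonalArray f ∧ IsRealization f L Subtype.val ∧ ∀ i, Set.range (L i) = A i := by
  let e (i) : A i ≃ Fin k := (A i).equivFinOfCardEq (h.card_eq i)
  choose ℓ hℓ hℓ_unique using fun (i) (X : χ) => h.unique_line X X.2 i
  let f : ι → χ → Fin k := fun i X => e i ⟨ℓ i X, (hℓ i X).1⟩
  let L : ι → Fin k → Submodule K V := fun i c => (e i).symm c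
  have hL (i c) : L i c ∈ A i := ((e i).symm c).2
  have hreal : IsRealization f L Subtype.val :=
    { finrank_line := fun i c => h.finrank_line i _ (hL i c)
      finrank_point := fun X => h.finrank_point X X.2
      le_iff := fun i c X => by
        rw [← Equiv.eq_symm_apply, Subtype.ext_iff]
        exact ⟨fun hle => (hℓ_unique i X _ ⟨hL i c, hle⟩).symm,
          fun heq => (hℓ i X).2.trans (le_of_eq heq)⟩ }
  refine ⟨f, L, fun i j hij => ⟨fun X Y hXY => ?_, fun ⟨c, d⟩ => ?_⟩, hreal, fun i => ?_⟩
  · obtain ⟨hi, hj⟩ := Prod.ext_iff.1 hXY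
    have inf_eq (Z : χ) (hZi : f i Z = f i Y) (hZj : f j Z = f j Y) :
        L i (f i Y) ⊓ L j (f j Y) = Z :=
      inf_eq_of_finrank_eq_two (hreal.finrank_point Z) (hreal.finrank_line _ _)
        (hreal.finrank_line _ _) (h.inter_mem i j hij _ (hL _ _) _ (hL _ _)).1
        ((hreal.le_iff _ _ _).2 hZi) ((hreal.le_iff _ _ _).2 hZj)
    exact Subtype.ext ((inf_eq X hi hj).symm.trans (inf_eq Y rfl rfl))
  · exact ⟨⟨_, (h.inter_mem i j hij _ (hL i c) _ (hL j d)).2⟩,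
      Prod.ext ((hreal.le_iff _ _ _).1 inf_le_left) ((hreal.le_iff _ _ _).1 inf_le_right)⟩
  · change Set.range (Subtype.val ∘ (e i).symm) = _
    rw [(e i).symm.surjective.range_comp, Subtype.range_coe]

theorem IsProjectiveNet.exists_isRealization_parallelClass {A : Fin 4 → Finset (Submodule K V)}
    (h : IsProjectiveNet 3 A χ) :
    ∃ (L : Fin 4 → Fin 3 → Submodule K V) (p : Fin 3 × Fin 3 → Submodule K V),
      IsRealization parallelClass L p ∧
        ⋃ i, Set.range (L i) = ⋃ i, (A i : Set (Submodule K V)) := by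
  obtain ⟨f, L, hf, hL, hA⟩ := h.exists_isRealization
  obtain ⟨σ, τ, e, hστ⟩ := hf.exists_relabelling
  exact ⟨_, _, hL.relabel σ τ e hστ, (iUnion_range_relabel L σ τ).trans (Set.iUnion_congr hA)⟩

theorem IsRealization.isProjectiveNet {α : Type*} [Fintype α] [Nontrivial ι]
    [DecidableEq (Submodule K V)] (hk : 2 ≤ k) {f : ι → α → Fin k} {L : ι → Fin k → Submodule K V}
    {p : α → Submodule K V} (hf : IsOrthogonalArray f) (h : IsRealization f L p) :
    IsProjectiveNet k (fun i => Finset.univ.image (L i)) (Finset.univ.image p) := by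
  have : Nontrivial (Fin k) := Fin.nontrivial_iff_two_le.2 hk
  have inter_mem {i j} (hij : i ≠ j) (c d) : L i c ≠ L j d ∧ ∃ q, p q = L i c ⊓ L j d := by
    have hne := h.line_ne_line hf hij c d
    obtain ⟨q, rfl, rfl⟩ := hf.exists_eq_and_eq hij c d
    exact ⟨hne, q, (inf_eq_of_finrank_eq_two (h.finrank_point q) (h.finrank_line _ _)
      (h.finrank_line _ _) hne (h.le_line i q) (h.le_line j q)).symm⟩
  have unique_line (q i) : ∃! ℓ, (∃ c, L i c = ℓ) ∧ p q ≤ ℓ := by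
    refine ⟨_, ⟨⟨_, rfl⟩, h.le_line i q⟩, ?_⟩
    rintro _ ⟨⟨c, rfl⟩, hle⟩
    rw [(h.le_iff i c q).1 hle]
  exact
    { finrank_line := by simpa using h.finrank_line
      finrank_point := by simpa using h.finrank_point
      card_eq := fun i => by simp [Finset.card_image_of_injective _ (h.injective_line hf i)]
      inter_mem := fun i j hij => by simpa using inter_mem hij
      unique_line := by simpa using unique_line }

end Net

section Hessian

variable {K V : Type*} [Field K] [AddCommGroup V] [Module K V]

/-- Homogeneous coordinates of the nine points of the Hessian configuration relative to the frame
formed by the points labelled `(0, 0)`, `(1, 0)`, `(0, 1)`, `(1, 1)`; here `x` is to be a root of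
`x ^ 2 - x + 1`. -/
def hessianVec (x : K) (q : Fin 3 × Fin 3) : Fin 3 → K :=
  (![![![1, 0, 0], ![0, 0, 1], ![1, 0, 1 - x]],
    ![![0, 1, 0], ![1, 1, 1], ![1, x, 1]],
    ![![1, x, 0], ![1, 1, 1 - x], ![0, 1, 1]]] : Fin 3 → Fin 3 → Fin 3 → K) q.1 q.2

/-- Coefficients of the equations of the twelve lines of the Hessian configuration, grouped by
parallel class, in the coordinates of `hessianVec`. -/
def hessianCovec (x : K) : Fin 4 → Fin 3 → Fin 3 → K :=
  ![![![0, 1, 0], ![1, 0, -1], ![x, -1, 1]],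
    ![![0, 0, 1], ![1, -1, 0], ![1 - x, 1, -1]],
    ![![0, 1, -x], ![1, 0, 0], ![1, x - 1, -x]],
    ![![0, 1, -1], ![x, -1, 0], ![1 - x, 0, -1]]]

/-- The points of the Hessian configuration as subspaces of `K³`. -/
def hessianPoint (x : K) (q : Fin 3 × Fin 3) : Submodule K (Fin 3 → K) :=
  span K {hessianVec x q}

/-- The lines of the Hessian configuration as subspaces of `K³`. -/
def hessianLine (x : K) (i : Fin 4) (c : Fin 3) : Submodule K (Fin 3 → K) :=
  LinearMap.ker (dotProductEquiv K (Fin 3) (hessianCovec x i c))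

theorem hessianCovec_dotProduct_hessianVec_eq_zero_iff {x : K} (hx : x ^ 2 - x + 1 = 0)
    (i : Fin 4) (c : Fin 3) (q : Fin 3 × Fin 3) :
    hessianCovec x i c ⬝ᵥ hessianVec x q = 0 ↔ parallelClass i q = c := by
  have hx0 : x ≠ 0 := by rintro rfl; simp at hx
  have hx1 : x ≠ 1 := by rintro rfl; simp at hx
  obtain ⟨a, b⟩ := q
  fin_cases i <;> fin_cases c <;> fin_cases a <;> fin_cases b <;>
    simp [hessianCovec, hessianVec, parallelClass] <;> grind

theorem isRealization_hessian {x : K} (hx : x ^ 2 - x + 1 = 0) :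
    IsRealization parallelClass (hessianLine x) (hessianPoint x) where
  finrank_line i c := by
    have hne : hessianCovec x i c ≠ 0 := by
      fin_cases i <;> fin_cases c <;> simp [hessianCovec]
    have hker := Module.Dual.finrank_ker_add_one_of_ne_zero
      ((map_ne_zero_iff _ (dotProductEquiv K (Fin 3)).injective).2 hne)
    rw [Module.finrank_fin_fun] at hker
    exact Nat.succ_injective hker
  finrank_point q := by
    refine finrank_span_singleton ?_
    obtain ⟨a, b⟩ := q
    fin_cases a <;> fin_cases b <;> simp [hessianVec]
  le_iff i c q := by
    rw [hessianPoint, hessianLine, span_singleton_le_iff_mem, LinearMap.mem_ker,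
      dotProductEquiv_apply_apply, hessianCovec_dotProduct_hessianVec_eq_zero_iff hx]

namespace IsRealization

variable {L : Fin 4 → Fin 3 → Submodule K V} {p : Fin 3 × Fin 3 → Submodule K V}

theorem exists_map_frame (hV : Module.finrank K V = 3) (h : IsRealization parallelClass L p) :
    ∃ g : V ≃ₗ[K] (Fin 3 → K), (p (0, 0)).map g.toLinearMap = span K {![1, 0, 0]} ∧
      (p (1, 0)).map g.toLinearMap = span K {![0, 1, 0]} ∧
      (p (0, 1)).map g.toLinearMap = span K {![0, 0, 1]} ∧
      (p (1, 1)).map g.toLinearMap = span K {![1, 1, 1]} := by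
  obtain ⟨g, hg, hg₁⟩ := exists_linearEquiv_map_frame (ι := Fin 3)
    (p := ![p (0, 0), p (1, 0), p (0, 1)]) (W := ![L 2 1, L 0 0, L 1 0]) (Q := p (1, 1))
    (by simp [hV]) (fun i => by fin_cases i <;> exact h.finrank_point _) (h.finrank_point _)
    (by simp [Fin.forall_fin_succ, h.le_iff, parallelClass])
    (by simp [Fin.forall_fin_succ, h.le_iff, parallelClass])
  refine ⟨g, (hg 0).trans ?_, (hg 1).trans ?_, (hg 2).trans ?_, hg₁.trans ?_⟩ <;> congr 2 <;>
    ext j <;> fin_cases j <;> rfl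

theorem exists_point_eq_hessianPoint {L : Fin 4 → Fin 3 → Submodule K (Fin 3 → K)}
    {p : Fin 3 × Fin 3 → Submodule K (Fin 3 → K)} (h : IsRealization parallelClass L p)
    (h00 : p (0, 0) = span K {![1, 0, 0]}) (h10 : p (1, 0) = span K {![0, 1, 0]})
    (h01 : p (0, 1) = span K {![0, 0, 1]}) (h11 : p (1, 1) = span K {![1, 1, 1]}) :
    ∃ x : K, x ^ 2 - x + 1 = 0 ∧ ∀ q, p q = hessianPoint x q := by
  have third_point {q r} (s i) {u v : Fin 3 → K} := h.exists_point_eq_span_add_smul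
    isOrthogonalArray_parallelClass i (q := q) (r := r) (s := s) (u := u) (v := v)
  obtain ⟨x, h20⟩ := third_point (2, 0) 1 h00 h10 (by decide) (by decide) rfl rfl
  obtain ⟨y, h02⟩ := third_point (0, 2) 0 h00 h01 (by decide) (by decide) rfl rfl
  obtain ⟨z, h21⟩ := third_point (2, 1) 1 h11 h01 (by decide) (by decide) rfl rfl
  obtain ⟨w, h12⟩ := third_point (1, 2) 0 h11 h10 (by decide) (by decide) rfl rfl
  obtain ⟨t, h22⟩ := third_point (2, 2) 2 h10 h01 (by decide) (by decide) rfl rfl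
  have ht : t = 1 := by
    have := h.det_eq_zero 3 h00 h11 h22 rfl rfl
    exact sub_eq_zero.1 (by simpa [Matrix.det_fin_three] using this)
  have hw : w = x - 1 := by
    have := h.det_eq_zero 3 h01 h12 h20 rfl rfl
    linear_combination -(by simpa [Matrix.det_fin_three] using this : x - (1 + w) = 0)
  subst ht hw
  have hz : z = -x := by
    have := h.det_eq_zero 0 h20 h21 h22 rfl rfl
    linear_combination -(by simpa [Matrix.det_fin_three] using this : 1 - (1 + z) - x = 0)
  subst hz
  have hy : y = 1 - x := by
    have := h.det_eq_zero 3 h10 h02 h21 rfl rfl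
    linear_combination (by simpa [Matrix.det_fin_three] using this : x + -1 + y = 0)
  subst hy
  have hx : x ^ 2 - x + 1 = 0 := by
    have := h.det_eq_zero 2 h00 h12 h21 rfl rfl
    linear_combination -(by simpa [Matrix.det_fin_three] using this : x * (1 + -x) - 1 = 0)
  refine ⟨x, hx, ?_⟩
  rintro ⟨a, b⟩
  fin_cases a <;> fin_cases b
  exacts [h00, h01, by simpa [hessianPoint, hessianVec] using h02,
    h10, h11, by simpa [hessianPoint, hessianVec] using h12,
    by simpa [hessianPoint, hessianVec] using h20,
    by simpa [hessianPoint, hessianVec, sub_eq_add_neg] using h21,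
    by simpa [hessianPoint, hessianVec] using h22]

theorem exists_map_eq_hessianPoint (hV : Module.finrank K V = 3)
    (h : IsRealization parallelClass L p) :
    ∃ (g : V ≃ₗ[K] (Fin 3 → K)) (x : K), x ^ 2 - x + 1 = 0 ∧
      ∀ q, (p q).map g.toLinearMap = hessianPoint x q := by
  obtain ⟨g, h00, h10, h01, h11⟩ := h.exists_map_frame hV
  exact ⟨g, (h.map g).exists_point_eq_hessianPoint h00 h10 h01 h11⟩

end IsRealization

theorem map_hessianPoint_swap (x : K) (q : Fin 3 × Fin 3) :
    (hessianPoint x q.swap).map (LinearEquiv.funCongrLeft K K (Equiv.swap 1 2)).toLinearMap =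
      hessianPoint (1 - x) q := by
  rw [hessianPoint, hessianPoint, map_span, Set.image_singleton]
  congr 2
  ext j
  obtain ⟨a, b⟩ := q
  fin_cases a <;> fin_cases b <;> fin_cases j <;>
    simp [hessianVec, LinearEquiv.funCongrLeft_apply, LinearMap.funLeft_apply,
      Equiv.swap_apply_def]

theorem bijOn_hessianLine_swap {x : K} (hx : x ^ 2 - x + 1 = 0) :
    Set.BijOn (Submodule.map (LinearEquiv.funCongrLeft K K (Equiv.swap (1 : Fin 3) 2)).toLinearMap)
      (⋃ i, Set.range (hessianLine x i)) (⋃ i, Set.range (hessianLine (1 - x) i)) := by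
  have hx' : (1 - x) ^ 2 - (1 - x) + 1 = 0 := by linear_combination hx
  have hswap := (isRealization_hessian hx).relabel _ _ Prod.swap parallelClass_swap
  rw [← iUnion_range_relabel (hessianLine x)]
  exact hswap.bijOn_lines isOrthogonalArray_parallelClass (isRealization_hessian hx') _
    (map_hessianPoint_swap x)

theorem IsRealization.exists_bijOn_hessianLine {L : Fin 4 → Fin 3 → Submodule K V}
    {p : Fin 3 × Fin 3 → Submodule K V} (hV : Module.finrank K V = 3)
    (h : IsRealization parallelClass L p) {x : K} (hx : x ^ 2 - x + 1 = 0) :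
    ∃ g : V ≃ₗ[K] (Fin 3 → K), Set.BijOn (Submodule.map g.toLinearMap)
      (⋃ i, Set.range (L i)) (⋃ i, Set.range (hessianLine x i)) := by
  obtain ⟨g, y, hy, hg⟩ := h.exists_map_eq_hessianPoint hV
  have hbij := h.bijOn_lines isOrthogonalArray_parallelClass (isRealization_hessian hy) g hg
  have hroots : (y - x) * (x - (1 - y)) = 0 := by linear_combination hy - hx
  obtain hyx | hyx := mul_eq_zero.1 hroots
  · obtain rfl := sub_eq_zero.1 hyx
    exact ⟨g, hbij⟩
  · obtain rfl := sub_eq_zero.1 hyx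
    refine ⟨g.trans (LinearEquiv.funCongrLeft K K (Equiv.swap 1 2)), ?_⟩
    exact bijOn_map_trans hbij (bijOn_hessianLine_swap hy)

variable {A : Fin 4 → Finset (Submodule K V)} {χ : Finset (Submodule K V)}

theorem IsProjectiveNet.exists_sq_sub_add_one_eq_zero (hV : Module.finrank K V = 3)
    (h : IsProjectiveNet 3 A χ) : ∃ x : K, x ^ 2 - x + 1 = 0 := by
  obtain ⟨L, p, hL, -⟩ := h.exists_isRealization_parallelClass
  obtain ⟨-, x, hx, -⟩ := hL.exists_map_eq_hessianPoint hV
  exact ⟨x, hx⟩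

theorem IsProjectiveNet.exists_bijOn_hessianLine (hV : Module.finrank K V = 3)
    (h : IsProjectiveNet 3 A χ) {x : K} (hx : x ^ 2 - x + 1 = 0) :
    ∃ g : V ≃ₗ[K] (Fin 3 → K), Set.BijOn (Submodule.map g.toLinearMap)
      (⋃ i, (A i : Set (Submodule K V))) (⋃ i, Set.range (hessianLine x i)) := by
  obtain ⟨L, p, hL, hLA⟩ := h.exists_isRealization_parallelClass
  rw [← hLA]
  exact hL.exists_bijOn_hessianLine hV hx

theorem exists_isProjectiveNet (hV : Module.finrank K V = 3) {x : K} (hx : x ^ 2 - x + 1 = 0) :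
    ∃ (A : Fin 4 → Finset (Submodule K V)) (χ : Finset (Submodule K V)),
      IsProjectiveNet 3 A χ := by
  classical
  have : FiniteDimensional K V := Module.finite_of_finrank_pos (by lia)
  let g : (Fin 3 → K) ≃ₗ[K] V := .ofFinrankEq _ _ (by simp [hV])
  exact ⟨_, _, ((isRealization_hessian hx).map g).isProjectiveNet (by norm_num)
    isOrthogonalArray_parallelClass⟩

end Hessian

theorem exists_sq_sub_add_one_eq_zero (K : Type*) [Field K] [IsAlgClosed K] :
    ∃ x : K, x ^ 2 - x + 1 = 0 := by
  have hdeg : (Polynomial.X ^ 2 - Polynomial.X + 1 : Polynomial K).degree = 2 := by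
    compute_degree!
  simpa using IsAlgClosed.exists_root _ (hdeg.trans_ne two_ne_zero)

theorem net_4_3_exists_and_unique_general {K V : Type*} [Field K] [AddCommGroup V] [Module K V]
    (hV : Module.finrank K V = 3) :
    ((∃ (A : Fin 4 → Finset (Submodule K V)) (χ : Finset (Submodule K V)),
        IsProjectiveNet 3 A χ) ↔ ∃ x : K, x ^ 2 - x + 1 = 0) ∧
    ∀ (A A' : Fin 4 → Finset (Submodule K V)) (χ χ' : Finset (Submodule K V)),
      IsProjectiveNet 3 A χ → IsProjectiveNet 3 A' χ' →
      ∃ g : V ≃ₗ[K] V, Set.BijOn (Submodule.map g.toLinearMap)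
        (⋃ i, (A i : Set (Submodule K V))) (⋃ i, (A' i : Set (Submodule K V))) := by
  refine ⟨⟨fun ⟨_, _, h⟩ => h.exists_sq_sub_add_one_eq_zero hV,
    fun ⟨_, hx⟩ => exists_isProjectiveNet hV hx⟩, fun A A' χ χ' h h' => ?_⟩
  obtain ⟨x, hx⟩ := h.exists_sq_sub_add_one_eq_zero hV
  obtain ⟨g, hg⟩ := h.exists_bijOn_hessianLine hV hx
  obtain ⟨g', hg'⟩ := h'.exists_bijOn_hessianLine hV hx
  exact ⟨g.trans g'.symm, bijOn_map_trans hg (bijOn_map_symm hg')⟩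

/-- There exists a `(4,3)`-net in `ℂℙ²` (the Hessian configuration), and it is
unique up to projective isomorphism: for any two `(4,3)`-nets there is a linear
automorphism `g` of `ℂ³` whose induced action on subspaces maps the set of
lines of the first net bijectively onto the set of lines of the second. -/
theorem net_4_3_exists_and_unique :
    (∃ (A : Fin 4 → Finset (Submodule ℂ (Fin 3 → ℂ)))
        (χ : Finset (Submodule ℂ (Fin 3 → ℂ))), IsNet 4 3 A χ) ∧
    ∀ (A A' : Fin 4 → Finset (Submodule ℂ (Fin 3 → ℂ)))
      (χ χ' : Finset (Submodule ℂ (Fin 3 → ℂ))),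
      IsNet 4 3 A χ → IsNet 4 3 A' χ' →
      ∃ g : (Fin 3 → ℂ) ≃ₗ[ℂ] (Fin 3 → ℂ),
        Set.BijOn (Submodule.map g.toLinearMap)
          (⋃ i, (A i : Set (Submodule ℂ (Fin 3 → ℂ))))
          (⋃ i, (A' i : Set (Submodule ℂ (Fin 3 → ℂ)))) := by
  obtain ⟨exists_iff, unique⟩ :=
    net_4_3_exists_and_unique_general (K := ℂ) (V := Fin 3 → ℂ) (by simp)
  simpa [isNet_iff] using And.intro (exists_iff.2 (exists_sq_sub_add_one_eq_zero ℂ)) unique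
end
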